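/- arXiv:1712.08306 — 2 statements merged into one kernel-verified Lean document; each statement's English description precedes it below -/
import Mathlib

section
/- For every integer k with 1 ≤ k ≤ n one has G_k^{(1,0)} = U_k U_{k−1}/2^{k−1} > 0, G_k^{(1,1)} = U_k V_{k−1}/2^{k−1} > 0, G_k^{(2,1)} = V_k V_{k−1}/2^{k−1} > 0, and G_k^{(2,0)} = (U_{k−1} V_k − U_{k+1} V_{k−2})/2^{k−1}. -/
open Finset

/-- Single moments `α_i = Σ_p ζ_p^i a_p`. -/
noncomputable def alphaM (n : ℕ) (ζ a : Fin n → ℝ) (i : ℤ) : ℝ :=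
  ∑ p : Fin n, ζ p ^ i * a p

/-- Bimoments `I_{i,j} = Σ_p Σ_q ζ_p^i ζ_q^j / (ζ_p + ζ_q) a_p a_q`. -/
noncomputable def Imom (n : ℕ) (ζ a : Fin n → ℝ) (i j : ℤ) : ℝ :=
  ∑ p : Fin n, ∑ q : Fin n, ζ p ^ i * ζ q ^ j / (ζ p + ζ q) * (a p * a q)

/-- `F_k^{(i,j)} = det (I_{i+r,j+s})_{0 ≤ r,s ≤ k-1}`, with `F_0 = 1` and `F_k = 0` for `k < 0`. -/
noncomputable def Fdet (n : ℕ) (ζ a : Fin n → ℝ) (i j k : ℤ) : ℝ :=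
  if k < 0 then 0
  else Matrix.det (Matrix.of fun r s : Fin k.toNat =>
    Imom n ζ a (i + ((r : ℕ) : ℤ)) (j + ((s : ℕ) : ℤ)))

/-- `G_k^{(i,j)}`: first column `(α_{i-1}, …, α_{i+k-2})ᵀ`, remaining block
`(I_{i+r,j+s})_{0 ≤ r ≤ k-1, 0 ≤ s ≤ k-2}`; `G_1 = α_{i-1}` and `G_k = 0` for `k < 1`. -/
noncomputable def Gdet (n : ℕ) (ζ a : Fin n → ℝ) (i j k : ℤ) : ℝ :=
  if k < 1 then 0
  else Matrix.det (Matrix.of fun r s : Fin k.toNat =>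
    if (s : ℕ) = 0 then alphaM n ζ a (i - 1 + ((r : ℕ) : ℤ))
    else Imom n ζ a (i + ((r : ℕ) : ℤ)) (j + (((s : ℕ) - 1 : ℕ) : ℤ)))

/-- `E_k^{(i,j)}`: `(1,1)` entry `0`, first row `(0, α_{j-1}, …, α_{j+k-3})`, first column
`(0, α_{i-1}, …, α_{i+k-3})ᵀ`, remaining block `(I_{i+r,j+s})_{0 ≤ r,s ≤ k-2}`;
`E_k = 0` for `k < 2`. -/
noncomputable def Edet (n : ℕ) (ζ a : Fin n → ℝ) (i j k : ℤ) : ℝ :=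
  if k < 2 then 0
  else Matrix.det (Matrix.of fun r s : Fin k.toNat =>
    if (r : ℕ) = 0 then
      (if (s : ℕ) = 0 then 0 else alphaM n ζ a (j - 1 + (((s : ℕ) - 1 : ℕ) : ℤ)))
    else if (s : ℕ) = 0 then alphaM n ζ a (i - 1 + (((r : ℕ) - 1 : ℕ) : ℤ))
    else Imom n ζ a (i + (((r : ℕ) - 1 : ℕ) : ℤ)) (j + (((s : ℕ) - 1 : ℕ) : ℤ)))

/-- `Δ_I = Π_{p<q, p,q ∈ I} (ζ_q - ζ_p)` (empty product `1`). -/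
noncomputable def DeltaI (n : ℕ) (ζ : Fin n → ℝ) (I : Finset (Fin n)) : ℝ :=
  ∏ p ∈ I, ∏ q ∈ I, if p < q then ζ q - ζ p else 1

/-- `Γ_I = Π_{p<q, p,q ∈ I} (ζ_q + ζ_p)` (empty product `1`). -/
noncomputable def GammaI (n : ℕ) (ζ : Fin n → ℝ) (I : Finset (Fin n)) : ℝ :=
  ∏ p ∈ I, ∏ q ∈ I, if p < q then ζ q + ζ p else 1

/-- `U_k = Σ_{I ⊆ {1,…,n}, |I| = k} (Δ_I²/Γ_I) Π_{j∈I} a_j`, with `U_0 = 1` and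
`U_k = 0` for `k < 0` and `k > n`. -/
noncomputable def Usum (n : ℕ) (ζ a : Fin n → ℝ) (k : ℤ) : ℝ :=
  if k < 0 ∨ (n : ℤ) < k then 0
  else ∑ I ∈ Finset.powersetCard k.toNat (Finset.univ : Finset (Fin n)),
    DeltaI n ζ I ^ 2 / GammaI n ζ I * ∏ j ∈ I, a j

/-- `V_k = Σ_{I ⊆ {1,…,n}, |I| = k} (Δ_I²/Γ_I) Π_{j∈I} ζ_j a_j`, with `V_0 = 1` and
`V_k = 0` for `k < 0` and `k > n`. -/
noncomputable def Vsum (n : ℕ) (ζ a : Fin n → ℝ) (k : ℤ) : ℝ :=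
  if k < 0 ∨ (n : ℤ) < k then 0
  else ∑ I ∈ Finset.powersetCard k.toNat (Finset.univ : Finset (Fin n)),
    DeltaI n ζ I ^ 2 / GammaI n ζ I * ∏ j ∈ I, ζ j * a j

/-- `W_k = V_k U_k - V_{k-1} U_{k+1}` (so `W_0 = 1`, `W_k = 0` for `k < 0` and `k > n`). -/
noncomputable def Wsum (n : ℕ) (ζ a : Fin n → ℝ) (k : ℤ) : ℝ :=
  Vsum n ζ a k * Usum n ζ a k - Vsum n ζ a (k - 1) * Usum n ζ a (k + 1)

/-!
By Cauchy–Binet, the moment matrix factors through Vandermonde matrices and the kernel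
`1 / (ζ_p + ζ_q)`, so that `G_{m+1}^{(1,j)}` with `j ≤ 1` becomes a sum over `m + 1` row points
and `m` column points of two squared Vandermonde determinants divided by all the sums `ζ_p + ζ_q`.
The product of the two sums `U` and `V` is a sum over the same `2 m + 1` points with another weight,
and the two weights agree after symmetrisation. Cleared of denominators, this is a polynomial
identity that balances the splittings of `2 m + 1` points into `m + 1` and `m`: as a polynomial in
one of the points, the difference of its two sides has degree at most `3 m` but, by induction on
`m`, a double root at each of the other `2 m` points.

Replacing the weights `a_p` by `ζ_p a_p` raises both indices of `G` by one, which gives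
`G_k^{(2,1)}`, and `G_k^{(2,0)}` is then the only unknown in a Desnanot–Jacobi identity.
-/

section PairProd

variable {ι κ R : Type*} [LinearOrder ι] [LinearOrder κ]

/-- The product of a kernel `w` over all pairs `p < q` of elements of `C`. For a symmetric kernel
this is the product over the two-element subsets of `C`. -/
def pairProd [CommMonoid R] (w : ι → ι → R) (C : Finset ι) : R :=
  ∏ p ∈ C, ∏ q ∈ C, if p < q then w p q else 1

section CommMonoid

variable [CommMonoid R] {w : ι → ι → R}

@[simp]
lemma pairProd_empty : pairProd w ∅ = 1 := prod_empty

lemma pairProd_insert (hw : ∀ p q, w p q = w q p) {p : ι} {C : Finset ι} (hp : p ∉ C) :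
    pairProd w (insert p C) = pairProd w C * ∏ t ∈ C, w p t := by
  have hpair : ∀ t ∈ C, (if t < p then w t p else 1) * (if p < t then w p t else 1) = w p t := by
    intro t ht
    rcases lt_trichotomy t p with h | h | h
    · simp [h, h.not_gt, hw t p]
    · exact absurd (h ▸ ht) hp
    · simp [h, h.not_gt]
  simp only [pairProd, prod_insert hp, lt_irrefl, if_false, one_mul, prod_mul_distrib]
  rw [← prod_congr rfl hpair, prod_mul_distrib]
  ac_rfl

lemma pairProd_congr {w' : ι → ι → R} {C : Finset ι} (h : ∀ p ∈ C, ∀ q ∈ C, w p q = w' p q) :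
    pairProd w C = pairProd w' C :=
  prod_congr rfl fun p hp => prod_congr rfl fun q hq => by rw [h p hp q hq]

lemma pairProd_mul (w w' : ι → ι → R) (C : Finset ι) :
    pairProd (w * w') C = pairProd w C * pairProd w' C := by
  simp only [pairProd, ← prod_mul_distrib, Pi.mul_apply]
  exact prod_congr rfl fun p _ => prod_congr rfl fun q _ => by split_ifs <;> simp

lemma pairProd_map (hw : ∀ p q, w p q = w q p) (e : κ ↪ ι) (C : Finset κ) :
    pairProd w (C.map e) = pairProd (fun p q => w (e p) (e q)) C := by
  induction C using Finset.induction_on with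
  | empty => simp
  | insert p C hp ih =>
    rw [map_insert, pairProd_insert hw (by simpa using hp), ih, prod_map,
      pairProd_insert (fun p q => hw (e p) (e q)) hp]

lemma pairProd_union (hw : ∀ p q, w p q = w q p) {C D : Finset ι} (hCD : Disjoint C D) :
    pairProd w (C ∪ D) = pairProd w C * pairProd w D * ∏ p ∈ C, ∏ q ∈ D, w p q := by
  induction C using Finset.induction_on with
  | empty => simp
  | insert p C hp ih =>
    obtain ⟨hpD, hCD⟩ := disjoint_insert_left.mp hCD
    rw [insert_union, pairProd_insert hw (by simp [hp, hpD]), ih hCD, pairProd_insert hw hp,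
      prod_union hCD, prod_insert hp]
    ac_rfl

end CommMonoid

lemma map_pairProd {S F : Type*} [CommMonoid R] [CommMonoid S] [FunLike F R S]
    [MonoidHomClass F R S] (φ : F) (w : ι → ι → R) (C : Finset ι) :
    φ (pairProd w C) = pairProd (fun p q => φ (w p q)) C := by
  simp only [pairProd, map_prod, apply_ite φ, map_one]

lemma pairProd_eq_zero [CommMonoidWithZero R] {w : ι → ι → R} (hw : ∀ p q, w p q = w q p)
    {C : Finset ι} {p q : ι} (hp : p ∈ C) (hq : q ∈ C) (hpq : p ≠ q) (h : w p q = 0) :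
    pairProd w C = 0 := by
  rw [← insert_erase hp, pairProd_insert hw (notMem_erase p C),
    prod_eq_zero (mem_erase.mpr ⟨hpq.symm, hq⟩) h, mul_zero]

lemma pairProd_pos [CommSemiring R] [PartialOrder R] [IsStrictOrderedRing R] {w : ι → ι → R}
    {C : Finset ι} (hw : ∀ p q, p < q → 0 < w p q) : 0 < pairProd w C :=
  prod_pos fun p _ => prod_pos fun q _ => by
    split_ifs with h
    exacts [hw p q h, one_pos]

end PairProd

section SplitSum

variable {ι κ R : Type*} [LinearOrder ι] [LinearOrder κ] [CommRing R]

lemma sum_powersetCard_insert_sdiff {M : Type*} [AddCommMonoid M] (N : ℕ) {p : ι} {T : Finset ι}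
    (hp : p ∉ T) (F : Finset ι → Finset ι → M) :
    ∑ C ∈ powersetCard (N + 1) (insert p T), F C (insert p T \ C) =
      ∑ C ∈ powersetCard (N + 1) T, F C (insert p (T \ C)) +
        ∑ C ∈ powersetCard N T, F (insert p C) (T \ C) := by
  have hpC : ∀ {k : ℕ}, ∀ C ∈ powersetCard k T, p ∉ C := fun C hC h =>
    hp ((mem_powersetCard.mp hC).1 h)
  have hdisj : Disjoint (powersetCard (N + 1) T) ((powersetCard N T).image (insert p)) := by
    refine disjoint_left.mpr fun C hC hC' => ?_
    obtain ⟨C', -, rfl⟩ := mem_image.mp hC'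
    exact hpC _ hC (mem_insert_self p C')
  rw [powersetCard_succ_insert hp, sum_union hdisj, sum_image fun C hC C' hC' h => by
    rw [← erase_insert (hpC C hC), h, erase_insert (hpC C' hC')]]
  congr 1
  · exact sum_congr rfl fun C hC => by rw [insert_sdiff_of_notMem _ (hpC C hC)]
  · exact sum_congr rfl fun C _ => by
      rw [insert_sdiff_insert, sdiff_insert_of_notMem hp]

/-- The weight of a splitting of a set into an inner part `C` and an outer part `D`: the kernel
`w` on pairs inside `C` and inside `D`, the kernel `c` across, and a vertex weight `v` on `D`. -/
def splitTerm (w c : ι → ι → R) (v : ι → R) (C D : Finset ι) : R :=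
  pairProd w C * pairProd w D * (∏ p ∈ C, ∏ q ∈ D, c p q) * ∏ q ∈ D, v q

/-- The sum of `splitTerm w c v C (T \ C)` over all `N`-element subsets `C` of `T`. -/
def splitSum (w c : ι → ι → R) (v : ι → R) (N : ℕ) (T : Finset ι) : R :=
  ∑ C ∈ powersetCard N T, splitTerm w c v C (T \ C)

variable {w c : ι → ι → R} {v : ι → R}

lemma splitTerm_insert_left (hw : ∀ p q, w p q = w q p) {p : ι} {C D : Finset ι} (hp : p ∉ C) :
    splitTerm w c v (insert p C) D =
      splitTerm w c v C D * ((∏ t ∈ C, w p t) * ∏ t ∈ D, c p t) := by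
  rw [splitTerm, splitTerm, pairProd_insert hw hp, prod_insert hp]
  ring

lemma splitTerm_insert_right (hw : ∀ p q, w p q = w q p) (hc : ∀ p q, c p q = c q p) {p : ι}
    {C D : Finset ι} (hp : p ∉ D) :
    splitTerm w c v C (insert p D) =
      splitTerm w c v C D * (v p * (∏ t ∈ C, c p t) * ∏ t ∈ D, w p t) := by
  simp only [splitTerm, pairProd_insert hw hp, prod_insert hp, prod_mul_distrib, hc _ p]
  ring

lemma splitSum_congr {w' c' : ι → ι → R} {v' : ι → R} {N : ℕ} {T : Finset ι}
    (hw : ∀ p ∈ T, ∀ q ∈ T, w p q = w' p q) (hc : ∀ p ∈ T, ∀ q ∈ T, c p q = c' p q)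
    (hv : ∀ p ∈ T, v p = v' p) : splitSum w c v N T = splitSum w' c' v' N T := by
  refine sum_congr rfl fun C hC => ?_
  have hCT : C ⊆ T := (mem_powersetCard.mp hC).1
  have hDT : T \ C ⊆ T := sdiff_subset
  rw [splitTerm, splitTerm, pairProd_congr fun p hp q hq => hw p (hCT hp) q (hCT hq),
    pairProd_congr fun p hp q hq => hw p (hDT hp) q (hDT hq),
    prod_congr rfl fun p hp => prod_congr rfl fun q hq => hc p (hCT hp) q (hDT hq),
    prod_congr rfl fun p hp => hv p (hDT hp)]

lemma splitTerm_map (hw : ∀ p q, w p q = w q p) (e : κ ↪ ι) (C D : Finset κ) :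
    splitTerm w c v (C.map e) (D.map e) =
      splitTerm (fun p q => w (e p) (e q)) (fun p q => c (e p) (e q)) (fun p => v (e p)) C D := by
  simp only [splitTerm, pairProd_map hw, prod_map]

lemma splitSum_map (hw : ∀ p q, w p q = w q p) (e : κ ↪ ι) (N : ℕ) (T : Finset κ) :
    splitSum w c v N (T.map e) =
      splitSum (fun p q => w (e p) (e q)) (fun p q => c (e p) (e q)) (fun p => v (e p)) N T := by
  rw [splitSum, powersetCard_map, sum_map]
  exact sum_congr rfl fun C _ => by
    rw [RelEmbedding.coe_toEmbedding, mapEmbedding_apply, ← Finset.map_sdiff, splitTerm_map hw]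

lemma map_splitSum {S : Type*} [CommRing S] (φ : R →+* S) (N : ℕ) (T : Finset ι) :
    φ (splitSum w c v N T) =
      splitSum (fun p q => φ (w p q)) (fun p q => φ (c p q)) (fun p => φ (v p)) N T := by
  simp only [splitSum, splitTerm, map_sum, map_mul, map_prod, map_pairProd]

lemma splitSum_mul_kernel {s : ι → ι → R} (hs : ∀ p q, s p q = s q p) (N : ℕ) (T : Finset ι) :
    splitSum (w * s) (c * s) v N T = pairProd s T * splitSum w c v N T := by
  rw [splitSum, splitSum, mul_sum]
  refine sum_congr rfl fun C hC => ?_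
  nth_rw 2 [← union_sdiff_of_subset (mem_powersetCard.mp hC).1]
  simp only [splitTerm, pairProd_union hs disjoint_sdiff, pairProd_mul, Pi.mul_apply,
    prod_mul_distrib]
  ring

/-- Two coincident vertices `p`, `q` must lie on opposite sides, and each of the two placements
contributes the same multiple of the sum over the remaining vertices. -/
lemma splitSum_insert_insert_of_eq (hw : ∀ p q, w p q = w q p) (hc : ∀ p q, c p q = c q p)
    {p q : ι} {T : Finset ι} (hpq : p ≠ q) (hp : p ∉ T) (hq : q ∉ T) (hw0 : w p q = 0)
    (hwT : ∀ t ∈ T, w q t = w p t) (hcT : ∀ t ∈ T, c q t = c p t) (hv : v q = v p) (N : ℕ) :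
    splitSum w c v (N + 2) (insert p (insert q T)) =
      2 * c p q * v p * (∏ t ∈ T, w p t * c p t) * splitSum w c v (N + 1) T := by
  have hpT : p ∉ insert q T := by simp [hpq, hp]
  have vanish_left (C D : Finset ι) : splitTerm w c v (insert p (insert q C)) D = 0 := by
    rw [splitTerm, pairProd_eq_zero hw (by simp) (by simp) hpq hw0]
    ring
  have vanish_right (C D : Finset ι) : splitTerm w c v C (insert p (insert q D)) = 0 := by
    rw [splitTerm, pairProd_eq_zero hw (C := insert p (insert q D)) (by simp) (by simp) hpq hw0]
    ring
  rw [splitSum, sum_powersetCard_insert_sdiff (N + 1) hpT,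
    sum_powersetCard_insert_sdiff (N + 1) hq fun C D => splitTerm w c v C (insert p D),
    sum_powersetCard_insert_sdiff N hq fun C D => splitTerm w c v (insert p C) D]
  simp only [vanish_left, vanish_right, sum_const_zero, zero_add, add_zero, splitSum, mul_sum,
    ← sum_add_distrib]
  refine sum_congr rfl fun C hC => ?_
  have hCT : C ⊆ T := (mem_powersetCard.mp hC).1
  have hpC : p ∉ C := fun h => hp (hCT h)
  have hqC : q ∉ C := fun h => hq (hCT h)
  have hpD : p ∉ T \ C := fun h => hp (sdiff_subset h)
  have hqD : q ∉ T \ C := fun h => hq (sdiff_subset h)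
  have hqw : ∀ S ⊆ T, ∏ t ∈ S, w q t = ∏ t ∈ S, w p t := fun S hS =>
    prod_congr rfl fun t ht => hwT t (hS ht)
  have hqc : ∀ S ⊆ T, ∏ t ∈ S, c q t = ∏ t ∈ S, c p t := fun S hS =>
    prod_congr rfl fun t ht => hcT t (hS ht)
  rw [splitTerm_insert_right hw hc hpD, splitTerm_insert_left hw hqC,
    splitTerm_insert_left hw hpC, splitTerm_insert_right hw hc hqD, prod_insert hqC,
    prod_insert hqD, hqw _ hCT, hqw _ sdiff_subset, hqc _ hCT, hqc _ sdiff_subset, hv,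
    prod_mul_distrib, ← prod_sdiff hCT, ← prod_sdiff (f := fun t => c p t) hCT]
  ring

end SplitSum

section SplitDefect

open Polynomial

section CommRing

variable {ι κ R : Type*} [CommRing R]

/-- The symmetric kernel `(x_p - x_q)²`. -/
def sqDiff (x : ι → R) (p q : ι) : R := (x p - x q) ^ 2

/-- The symmetric kernel `x_p + x_q`. -/
def pairAdd (x : ι → R) (p q : ι) : R := x p + x q

lemma sqDiff_comm (x : ι → R) (p q : ι) : sqDiff x p q = sqDiff x q p := by
  simp only [sqDiff]; ring

lemma pairAdd_comm (x : ι → R) (p q : ι) : pairAdd x p q = pairAdd x q p := add_comm _ _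

lemma sqDiff_mul_pairAdd_comm (x : ι → R) (p q : ι) :
    (sqDiff x * pairAdd x) p q = (sqDiff x * pairAdd x) q p := by
  simp only [Pi.mul_apply, sqDiff_comm x p q, pairAdd_comm x p q]

variable [LinearOrder ι] [LinearOrder κ]

/-- The difference between the two sides of the identity `splitDefect_eq_zero`, which balances
the splittings of `2 m + 1` points into `m + 1` inner and `m` outer ones. -/
def splitDefect (f m : ℕ) (x : ι → R) (T : Finset ι) : R :=
  2 ^ m * splitSum (sqDiff x * pairAdd x) 1 (x ^ (f + 1)) (m + 1) T -
    splitSum (sqDiff x) (pairAdd x) (x ^ f) (m + 1) T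

lemma splitDefect_congr (f m : ℕ) {x y : ι → R} {T : Finset ι} (h : ∀ t ∈ T, x t = y t) :
    splitDefect f m x T = splitDefect f m y T := by
  have hsq : ∀ p ∈ T, ∀ q ∈ T, sqDiff x p q = sqDiff y p q := fun p hp q hq => by
    simp only [sqDiff, h p hp, h q hq]
  have hadd : ∀ p ∈ T, ∀ q ∈ T, pairAdd x p q = pairAdd y p q := fun p hp q hq => by
    simp only [pairAdd, h p hp, h q hq]
  have hpow (e : ℕ) : ∀ p ∈ T, (x ^ e) p = (y ^ e) p := fun p hp => by
    simp only [Pi.pow_apply, h p hp]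
  rw [splitDefect, splitDefect, splitSum_congr hsq hadd (hpow f),
    splitSum_congr (w := sqDiff x * pairAdd x) (w' := sqDiff y * pairAdd y)
      (fun p hp q hq => congrArg₂ (· * ·) (hsq p hp q hq) (hadd p hp q hq))
      (fun _ _ _ _ => rfl) (hpow (f + 1))]

lemma splitDefect_map (f m : ℕ) (x : ι → R) (e : κ ↪ ι) (T : Finset κ) :
    splitDefect f m x (T.map e) = splitDefect f m (x ∘ e) T := by
  rw [splitDefect, splitSum_map (sqDiff_mul_pairAdd_comm x), splitSum_map (sqDiff_comm x)]
  rfl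

lemma map_splitDefect {S : Type*} [CommRing S] (φ : R →+* S) (f m : ℕ) (x : ι → R)
    (T : Finset ι) : φ (splitDefect f m x T) = splitDefect f m (φ ∘ x) T := by
  simp only [splitDefect, map_sub, map_mul, map_pow, map_ofNat, map_splitSum]
  congr 2
  · congr 1 <;> ext <;> simp [sqDiff, pairAdd]
  · ext; simp [sqDiff]
  · ext; simp [pairAdd]
  · ext; simp

lemma splitDefect_insert_insert_of_eq (f m : ℕ) {x : ι → R} {p q : ι} {T : Finset ι}
    (hpq : p ≠ q) (hp : p ∉ T) (hq : q ∉ T) (hx : x p = x q) :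
    splitDefect f (m + 1) x (insert p (insert q T)) =
      4 * x p ^ (f + 1) * (∏ t ∈ T, sqDiff x p t * pairAdd x p t) * splitDefect f m x T := by
  rw [splitDefect,
    splitSum_insert_insert_of_eq (sqDiff_mul_pairAdd_comm x) (fun _ _ => rfl) hpq hp hq
      (by simp [sqDiff, hx]) (by simp [sqDiff, pairAdd, hx]) (fun _ _ => rfl) (by simp [hx]),
    splitSum_insert_insert_of_eq (sqDiff_comm x) (pairAdd_comm x) hpq hp hq
      (by simp [sqDiff, hx]) (by simp [sqDiff, hx]) (by simp [pairAdd, hx]) (by simp [hx]),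
    splitDefect]
  simp only [Pi.mul_apply, Pi.one_apply, mul_one, Pi.pow_apply, pairAdd, ← hx]
  ring

lemma splitDefect_singleton (f : ℕ) (x : ι → R) (p : ι) : splitDefect f 0 x {p} = 0 := by
  simp [splitDefect, splitSum, powersetCard_one, splitTerm, pairProd]

lemma splitDefect_comp_swap (f m : ℕ) (x : ι → R) {p q : ι} {T : Finset ι} (hp : p ∉ T)
    (hq : q ∉ T) : splitDefect f m (x ∘ Equiv.swap p q) (insert p (insert q T)) =
      splitDefect f m x (insert p (insert q T)) := by
  have hT : T.map (Equiv.swap p q).toEmbedding = T := by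
    rw [map_eq_image, image_congr (g := id), image_id]
    exact fun t ht => Equiv.swap_apply_of_ne_of_ne (ne_of_mem_of_not_mem ht hp)
      (ne_of_mem_of_not_mem ht hq)
  rw [← Equiv.coe_toEmbedding, ← splitDefect_map]
  simp [map_insert, hT, insert_comm]

lemma X_sq_dvd_of_comp_neg_X_eq [Invertible (2 : R)] {h : R[X]} (heven : h.comp (-X) = h)
    (h0 : h.eval 0 = 0) : X ^ 2 ∣ h := by
  refine X_pow_dvd_iff.mpr fun d hd => ?_
  interval_cases d
  · rwa [coeff_zero_eq_eval_zero]
  · have hcoeff : h.coeff 1 = -h.coeff 1 := by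
      conv_lhs => rw [← heven, neg_eq_neg_one_mul (X : R[X]), ← C_1, ← C_neg, comp_C_mul_X_coeff]
      simp
    rw [← invOf_mul_cancel_left (2 : R) (h.coeff 1), two_mul]
    nth_rw 1 [hcoeff]
    simp

/-- Reversing the displacement `X` interchanges the two moving points, so the defect is even in
`X`. It vanishes when the points meet, hence to second order. -/
lemma X_sq_dvd_splitDefect [Invertible (2 : R)] {f m : ℕ} {y : ι → R[X]} {p q : ι} {T : Finset ι}
    (hpq : p ≠ q) (hp : p ∉ T) (hq : q ∉ T) (hy : (y p).comp (-X) = y q)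
    (hyT : ∀ t ∈ T, (y t).comp (-X) = y t)
    (hT : splitDefect f m (fun t => (y t).eval 0) T = 0) :
    X ^ 2 ∣ splitDefect f (m + 1) y (insert p (insert q T)) := by
  apply X_sq_dvd_of_comp_neg_X_eq
  · calc (splitDefect f (m + 1) y (insert p (insert q T))).comp (-X)
      _ = splitDefect f (m + 1) (compRingHom (-X) ∘ y) (insert p (insert q T)) :=
          map_splitDefect (compRingHom (-X)) f (m + 1) y _
      _ = splitDefect f (m + 1) (y ∘ Equiv.swap p q) (insert p (insert q T)) := by
          refine splitDefect_congr f (m + 1) fun t ht => ?_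
          rcases mem_insert.mp ht with rfl | ht
          · simpa using hy
          · rcases mem_insert.mp ht with rfl | ht
            · simpa [← hy] using comp_neg_X_comp_neg_X (y p)
            · simpa [Equiv.swap_apply_of_ne_of_ne (ne_of_mem_of_not_mem ht hp)
                (ne_of_mem_of_not_mem ht hq)] using hyT t ht
      _ = _ := splitDefect_comp_swap f (m + 1) y hp hq
  · have hmeet : (y p).eval 0 = (y q).eval 0 := by simp [← hy]
    calc (splitDefect f (m + 1) y (insert p (insert q T))).eval 0
      _ = splitDefect f (m + 1) (fun t => (y t).eval 0) (insert p (insert q T)) :=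
          map_splitDefect (evalRingHom 0) f (m + 1) y _
      _ = 0 := by rw [splitDefect_insert_insert_of_eq f m hpq hp hq hmeet, hT, mul_zero]

lemma sq_sub_dvd_splitDefect [Invertible (2 : R)] {f m : ℕ} {x : ι → R} {p q : ι} {T : Finset ι}
    (hpq : p ≠ q) (hp : p ∉ T) (hq : q ∉ T) (hT : splitDefect f m x T = 0) :
    (x p - x q) ^ 2 ∣ splitDefect f (m + 1) x (insert p (insert q T)) := by
  set u : R := ⅟2 * (x p + x q) with hu
  set v : R := ⅟2 * (x p - x q) with hv
  have hxp : u + v = x p := by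
    linear_combination x p * invOf_two_add_invOf_two (R := R) + hu + hv
  have hxq : u - v = x q := by
    linear_combination x q * invOf_two_add_invOf_two (R := R) + hu - hv
  let y : ι → R[X] := fun t => if t = p then C u + X else if t = q then C u - X else C (x t)
  have hyT : ∀ t ∈ T, y t = C (x t) := fun t ht => by
    simp [y, ne_of_mem_of_not_mem ht hp, ne_of_mem_of_not_mem ht hq]
  obtain ⟨r, hr⟩ := X_sq_dvd_splitDefect (f := f) (m := m) (y := y) hpq hp hq
    (by simp [y, hpq.symm, sub_eq_add_neg]) (fun t ht => by simp [hyT t ht])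
    (by rwa [splitDefect_congr f m (y := x) fun t ht => by simp [hyT t ht]])
  have heval : splitDefect f (m + 1) x (insert p (insert q T)) = v ^ 2 * r.eval v := by
    have hr_eval := congrArg (evalRingHom v) hr
    rw [map_splitDefect, map_mul, map_pow, coe_evalRingHom, eval_X] at hr_eval
    rw [← hr_eval]
    refine splitDefect_congr f (m + 1) fun t ht => ?_
    rcases mem_insert.mp ht with rfl | ht
    · simp [y, hxp]
    · rcases mem_insert.mp ht with rfl | ht
      · simp [y, hpq.symm, hxq]
      · simp [hyT t ht]
  exact ⟨⅟2 ^ 2 * r.eval v, by rw [heval, hv]; ring⟩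

end CommRing

section Degree

variable {ι R : Type*} [CommRing R]

lemma natDegree_prod_le_card_mul {S : Finset ι} {F : ι → R[X]} {d : ℕ}
    (hF : ∀ t ∈ S, (F t).natDegree ≤ d) : (∏ t ∈ S, F t).natDegree ≤ #S * d :=
  (natDegree_prod_le S F).trans (sum_le_card_nsmul S _ d hF)

section Kernels

variable {y : ι → R[X]} {p q : ι} {d : ℕ}

lemma natDegree_sqDiff_le (hp : (y p).natDegree ≤ d) (hq : (y q).natDegree ≤ d) :
    (sqDiff y p q).natDegree ≤ 2 * d :=
  natDegree_pow_le_of_le 2 (natDegree_sub_le_of_le hp hq |>.trans (max_self d).le)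

lemma natDegree_pairAdd_le (hp : (y p).natDegree ≤ d) (hq : (y q).natDegree ≤ d) :
    (pairAdd y p q).natDegree ≤ d :=
  natDegree_add_le_of_degree_le hp hq

lemma natDegree_sqDiff_mul_pairAdd_le (hp : (y p).natDegree ≤ d) (hq : (y q).natDegree ≤ d) :
    ((sqDiff y * pairAdd y) p q).natDegree ≤ 2 * d + d :=
  natDegree_mul_le_of_le (natDegree_sqDiff_le hp hq) (natDegree_pairAdd_le hp hq)

end Kernels

variable [LinearOrder ι] {w c : ι → ι → R[X]} {v : ι → R[X]}

lemma natDegree_splitTerm_eq_zero {C D T : Finset ι} (hC : C ⊆ T) (hD : D ⊆ T)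
    (hw : ∀ p ∈ T, ∀ q ∈ T, (w p q).natDegree = 0)
    (hc : ∀ p ∈ T, ∀ q ∈ T, (c p q).natDegree = 0) (hv : ∀ p ∈ T, (v p).natDegree = 0) :
    (splitTerm w c v C D).natDegree = 0 := by
  have hprod {S : Finset ι} {F : ι → R[X]} (hF : ∀ t ∈ S, (F t).natDegree = 0) :
      (∏ t ∈ S, F t).natDegree = 0 := by
    simpa using natDegree_prod_le_card_mul fun t ht => (hF t ht).le
  have hpair {S : Finset ι} (hS : S ⊆ T) : (pairProd w S).natDegree = 0 :=
    hprod fun p hp => hprod fun q hq => by split_ifs <;> simp [hw p (hS hp) q (hS hq)]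
  have hcross : (∏ p ∈ C, ∏ q ∈ D, c p q).natDegree = 0 :=
    hprod fun p hp => hprod fun q hq => hc p (hC hp) q (hD hq)
  have hvert : (∏ q ∈ D, v q).natDegree = 0 := hprod fun q hq => hv q (hD hq)
  refine Nat.le_zero.mp (natDegree_mul_le.trans ?_)
  rw [hvert, add_zero]
  refine natDegree_mul_le.trans ?_
  rw [hcross, add_zero]
  refine natDegree_mul_le.trans ?_
  rw [hpair hC, hpair hD]

lemma natDegree_splitSum_insert_le (hw : ∀ p q, w p q = w q p) (hc : ∀ p q, c p q = c q p)
    {p : ι} {T : Finset ι} {M N dw dc dv d : ℕ} (hp : p ∉ T) (hT : #T = N + (M + 1))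
    (hwT : ∀ t ∈ T, ∀ t' ∈ T, (w t t').natDegree = 0)
    (hcT : ∀ t ∈ T, ∀ t' ∈ T, (c t t').natDegree = 0) (hvT : ∀ t ∈ T, (v t).natDegree = 0)
    (hwp : ∀ t ∈ T, (w p t).natDegree ≤ dw) (hcp : ∀ t ∈ T, (c p t).natDegree ≤ dc)
    (hvp : (v p).natDegree ≤ dv) (hinner : N * dw + (M + 1) * dc ≤ d)
    (houter : dv + (N + 1) * dc + M * dw ≤ d) :
    (splitSum w c v (N + 1) (insert p T)).natDegree ≤ d := by
  rw [splitSum, sum_powersetCard_insert_sdiff N hp]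
  have hprod {F : ι → R[X]} {e : ℕ} (hF : ∀ t ∈ T, (F t).natDegree ≤ e) {S : Finset ι}
      (hS : S ⊆ T) : (∏ t ∈ S, F t).natDegree ≤ #S * e :=
    natDegree_prod_le_card_mul fun t ht => hF t (hS ht)
  have hD : ∀ C : Finset ι, T \ C ⊆ T := fun C => sdiff_subset
  refine natDegree_add_le_of_degree_le (natDegree_sum_le_of_forall_le _ _ fun C hC => ?_)
    (natDegree_sum_le_of_forall_le _ _ fun C hC => ?_)
  · obtain ⟨hCT, hcard⟩ := mem_powersetCard.mp hC
    have hcardD : #(T \ C) = M := by rw [card_sdiff_of_subset hCT]; omega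
    rw [splitTerm_insert_right hw hc fun h => hp (hD C h)]
    refine (natDegree_mul_le.trans ?_).trans houter
    rw [natDegree_splitTerm_eq_zero hCT (hD C) hwT hcT hvT, zero_add]
    exact natDegree_mul_le_of_le (natDegree_mul_le_of_le hvp (hcard ▸ hprod hcp hCT))
      (hcardD ▸ hprod hwp (hD C))
  · obtain ⟨hCT, hcard⟩ := mem_powersetCard.mp hC
    have hcardD : #(T \ C) = M + 1 := by rw [card_sdiff_of_subset hCT]; omega
    rw [splitTerm_insert_left hw fun h => hp (hCT h)]
    refine (natDegree_mul_le.trans ?_).trans hinner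
    rw [natDegree_splitTerm_eq_zero hCT (hD C) hwT hcT hvT, zero_add]
    exact natDegree_mul_le_of_le (hcard ▸ hprod hwp hCT) (hcardD ▸ hprod hcp (hD C))

lemma natDegree_splitDefect_insert_le {f m : ℕ} (hf : f ≤ 1) {y : ι → R[X]} {p : ι}
    {T : Finset ι} (hp : p ∉ T) (hT : #T = 2 * (m + 1)) (hy : (y p).natDegree ≤ 1)
    (hyT : ∀ t ∈ T, (y t).natDegree = 0) :
    (splitDefect f (m + 1) y (insert p T)).natDegree ≤ 3 * (m + 1) := by
  have hT' : #T = m + 1 + (m + 1) := by omega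
  have hle (d : ℕ) : ∀ t ∈ T, (y t).natDegree ≤ d := fun t ht => (hyT t ht).trans_le d.zero_le
  have hpow (e : ℕ) : ∀ t ∈ T, ((y ^ e) t).natDegree = 0 := fun t ht => by
    simpa using natDegree_pow_le_of_le e (hle 0 t ht)
  refine (natDegree_sub_le_of_le (m := 3 * (m + 1)) (n := 3 * (m + 1)) ?_ ?_).trans
    (max_self _).le
  · have htwo : ((2 : R[X]) ^ (m + 1)).natDegree = 0 := by
      rw [← C_ofNat, ← C_pow, natDegree_C]
    rw [← zero_add (3 * (m + 1))]
    refine natDegree_mul_le_of_le htwo.le ?_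
    refine natDegree_splitSum_insert_le (dc := 0) (sqDiff_mul_pairAdd_comm y) (fun _ _ => rfl)
      hp hT' (fun t ht t' ht' => ?_) (fun _ _ _ _ => natDegree_one) (hpow (f + 1))
      (fun t ht => natDegree_sqDiff_mul_pairAdd_le hy (hle 1 t ht))
      (fun _ _ => natDegree_one.le) (natDegree_pow_le_of_le (f + 1) hy) (by omega) (by omega)
    simpa using natDegree_sqDiff_mul_pairAdd_le (hle 0 t ht) (hle 0 t' ht')
  · refine natDegree_splitSum_insert_le (sqDiff_comm y) (pairAdd_comm y) hp hT'
      (fun t ht t' ht' => ?_) (fun t ht t' ht' => ?_) (hpow f)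
      (fun t ht => natDegree_sqDiff_le hy (hle 1 t ht))
      (fun t ht => natDegree_pairAdd_le hy (hle 1 t ht)) (natDegree_pow_le_of_le f hy)
      (by omega) (by omega)
    · simpa using natDegree_sqDiff_le (hle 0 t ht) (hle 0 t' ht')
    · simpa using natDegree_pairAdd_le (hle 0 t ht) (hle 0 t' ht')

end Degree

section Field

variable {ι K : Type*} [LinearOrder ι] [Field K]

lemma splitDefect_eq_zero_of_injOn (h2 : (2 : K) ≠ 0) {f m : ℕ} (hf : f ≤ 1) {x : ι → K}
    {T : Finset ι} (hx : Set.InjOn x T) (hT : #T = 2 * m + 3)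
    (ih : ∀ S : Finset ι, #S = 2 * m + 1 → splitDefect f m x S = 0) :
    splitDefect f (m + 1) x T = 0 := by
  let _ : Invertible (2 : K) := invertibleOfNonzero h2
  let _ : Invertible (2 : K[X]) := (Invertible.map C (2 : K)).copy 2 (map_ofNat C 2).symm
  obtain ⟨p, S, hp, rfl, hS⟩ := card_eq_succ.mp hT
  let y : ι → K[X] := fun t => if t = p then X else C (x t)
  have hyp : y p = X := if_pos rfl
  have hyS : ∀ t ∈ S, y t = C (x t) := fun t ht => if_neg (ne_of_mem_of_not_mem ht hp)
  have hdvd : ∏ q ∈ S, (X - C (x q)) ^ 2 ∣ splitDefect f (m + 1) y (insert p S) := by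
    refine prod_dvd_of_coprime (fun q hq r hr hqr => IsCoprime.pow ?_) fun q hq => ?_
    · refine isCoprime_X_sub_C_of_isUnit_sub (sub_ne_zero.mpr fun h => hqr ?_).isUnit
      exact hx (mem_insert_of_mem hq) (mem_insert_of_mem hr) h
    · rw [← hyp, ← hyS q hq, ← insert_erase hq]
      have hcard : #(S.erase q) = 2 * m + 1 := by rw [card_erase_of_mem hq, hS]; rfl
      refine sq_sub_dvd_splitDefect (ne_of_mem_of_not_mem hq hp).symm
        (fun h => hp (mem_of_mem_erase h)) (notMem_erase q S) ?_
      rw [splitDefect_congr f m (y := C ∘ x) fun t ht => hyS t (mem_of_mem_erase ht),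
        ← map_splitDefect, ih _ hcard, map_zero]
  have hdeg : (splitDefect f (m + 1) y (insert p S)).natDegree <
      (∏ q ∈ S, (X - C (x q)) ^ 2).natDegree := by
    have hle : (splitDefect f (m + 1) y (insert p S)).natDegree ≤ 3 * (m + 1) :=
      natDegree_splitDefect_insert_le hf hp (by omega) (by rw [hyp, natDegree_X])
        fun t ht => by rw [hyS t ht, natDegree_C]
    rw [natDegree_prod_of_monic _ _ fun q _ => (monic_X_sub_C (x q)).pow 2]
    simp only [natDegree_pow, natDegree_X_sub_C, sum_const, smul_eq_mul, hS]
    omega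
  have hzero := congrArg (evalRingHom (x p)) (eq_zero_of_dvd_of_natDegree_lt hdvd hdeg)
  rw [map_splitDefect, map_zero] at hzero
  rw [← hzero]
  refine splitDefect_congr f (m + 1) fun t ht => ?_
  rcases mem_insert.mp ht with rfl | ht
  · simp [hyp]
  · simp [hyS t ht]

/-- When the points are distinct, the defect has too many roots as a polynomial in one of them; a
coincident pair splits off as a factor, leaving fewer points. -/
theorem splitDefect_eq_zero (h2 : (2 : K) ≠ 0) {f : ℕ} (hf : f ≤ 1) (m : ℕ) (x : ι → K)
    (T : Finset ι) (hT : #T = 2 * m + 1) : splitDefect f m x T = 0 := by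
  induction m generalizing T with
  | zero =>
    obtain ⟨p, rfl⟩ := card_eq_one.mp hT
    exact splitDefect_singleton f x p
  | succ m ih =>
    by_cases hx : Set.InjOn x T
    · exact splitDefect_eq_zero_of_injOn h2 hf hx (by omega) ih
    · obtain ⟨p, hp, q, hq, hxpq, hpq⟩ : ∃ p ∈ T, ∃ q ∈ T, x p = x q ∧ p ≠ q := by
        simpa [Set.InjOn] using hx
      have hq' : q ∈ T.erase p := mem_erase.mpr ⟨hpq.symm, hq⟩
      have hcard : #((T.erase p).erase q) = 2 * m + 1 := by
        rw [card_erase_of_mem hq', card_erase_of_mem hp]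
        omega
      rw [← insert_erase hp, ← insert_erase hq', splitDefect_insert_insert_of_eq f m hpq
        (by simp) (by simp) hxpq, ih _ hcard, mul_zero]

end Field

end SplitDefect

section RationalBalance

variable {ι K : Type*} [LinearOrder ι] [Field K]

theorem two_pow_mul_splitSum_inv_pairAdd {f m : ℕ} (hf : f ≤ 1) {x : ι → K}
    (hx : ∀ p q, x p + x q ≠ 0) {T : Finset ι} (hT : #T = 2 * m + 1) :
    2 ^ m * splitSum (sqDiff x) (pairAdd x)⁻¹ (x ^ (f + 1)) (m + 1) T =
      splitSum (sqDiff x / pairAdd x) 1 (x ^ f) (m + 1) T := by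
  obtain ⟨p, -⟩ : T.Nonempty := card_pos.mp (by omega)
  have h2 : (2 : K) ≠ 0 := left_ne_zero_of_mul (two_mul (x p) ▸ hx p p)
  have hne : pairProd (pairAdd x) T ≠ 0 :=
    prod_ne_zero_iff.mpr fun p _ => prod_ne_zero_iff.mpr fun q _ => by
      split_ifs
      exacts [hx p q, one_ne_zero]
  have hinv : (pairAdd x)⁻¹ * pairAdd x = 1 := by
    ext p q
    exact inv_mul_cancel₀ (hx p q)
  have hdiv : sqDiff x / pairAdd x * pairAdd x = sqDiff x := by
    ext p q
    exact div_mul_cancel₀ _ (hx p q)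
  apply mul_left_cancel₀ hne
  rw [mul_left_comm, ← splitSum_mul_kernel (pairAdd_comm x),
    ← splitSum_mul_kernel (pairAdd_comm x), hinv, hdiv, one_mul]
  exact sub_eq_zero.mp (splitDefect_eq_zero h2 hf m x T hT)

end RationalBalance

section Tuples

variable {ι R : Type*} [CommRing R]

/-- The weight of a tuple of indices, which may repeat: the kernel `w` on pairs of positions and
the vertex weight `a` at each position. -/
def tupleWeight (w : ι → ι → R) (a : ι → R) {k : ℕ} (f : Fin k → ι) : R :=
  pairProd (fun r s => w (f r) (f s)) univ * ∏ r, a (f r)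

lemma tupleWeight_eq_zero {w : ι → ι → R} (hw : ∀ p q, w p q = w q p) (hw0 : ∀ p, w p p = 0)
    (a : ι → R) {k : ℕ} {f : Fin k → ι} (hf : ¬ Function.Injective f) : tupleWeight w a f = 0 := by
  obtain ⟨r, s, hrs, hne⟩ := Function.not_injective_iff.mp hf
  rw [tupleWeight, pairProd_eq_zero (fun r s => hw (f r) (f s)) (mem_univ r) (mem_univ s) hne
    (by rw [hrs, hw0]), zero_mul]

section Splitting

variable {κ : Type*} [LinearOrder κ] {w c : ι → ι → R}

lemma prod_mul_splitTerm_map (hw : ∀ p q, w p q = w q p) (v a : ι → R) {k l : ℕ}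
    (e₁ : Fin k ↪ κ) (e₂ : Fin l ↪ κ) (h : κ → ι) :
    (∏ t ∈ univ.map e₁, a (h t)) * (∏ t ∈ univ.map e₂, a (h t)) *
        splitTerm (fun p q => w (h p) (h q)) (fun p q => c (h p) (h q)) (fun p => v (h p))
          (univ.map e₁) (univ.map e₂) =
      tupleWeight w a (h ∘ e₁) * tupleWeight w (v * a) (h ∘ e₂) *
        ∏ r, ∏ s, c (h (e₁ r)) (h (e₂ s)) := by
  simp only [splitTerm, tupleWeight, pairProd_map fun p q => hw (h p) (h q), prod_map,
    Function.comp_apply, Pi.mul_apply, prod_mul_distrib]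
  ring

variable [Fintype ι]

lemma sum_comp_orderEmbOfFin {M : Type*} [AddCommMonoid M] [Fintype κ] {k l : ℕ} {C : Finset κ}
    (hC : #C = k) (hD : #Cᶜ = l) (F : (Fin k → ι) → (Fin l → ι) → M) :
    ∑ h : κ → ι, F (h ∘ C.orderEmbOfFin hC) (h ∘ Cᶜ.orderEmbOfFin hD) = ∑ f, ∑ g, F f g := by
  rw [← Fintype.sum_prod_type']
  refine Fintype.sum_equiv (((finSumEquivOfFinset hC hD).symm.arrowCongr (Equiv.refl ι)).trans
    (Equiv.sumArrowEquivProdArrow _ _ _)) _ _ fun h => ?_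
  simp [Equiv.sumArrowEquivProdArrow, Equiv.arrowCongr, Function.comp_def]

/-- Labelling the `k + l` points arbitrarily makes all the `choose (k + l) k` splittings
contribute equally. -/
lemma sum_prod_mul_splitSum_comp (hw : ∀ p q, w p q = w q p) (v a : ι → R) (k l : ℕ) :
    ∑ h : Fin (k + l) → ι, (∏ t, a (h t)) *
        splitSum (fun p q => w (h p) (h q)) (fun p q => c (h p) (h q)) (fun p => v (h p)) k univ =
      (k + l).choose k * ∑ f : Fin k → ι, ∑ g : Fin l → ι,
        tupleWeight w a f * tupleWeight w (v * a) g * ∏ r, ∏ s, c (f r) (g s) := by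
  simp only [splitSum, mul_sum]
  rw [sum_comm, sum_congr rfl (g := fun _ => ∑ f : Fin k → ι, ∑ g : Fin l → ι,
    tupleWeight w a f * tupleWeight w (v * a) g * ∏ r, ∏ s, c (f r) (g s)), sum_const,
    card_powersetCard, card_univ, Fintype.card_fin, nsmul_eq_mul]
  · simp only [mul_sum]
  intro C hC
  have hCk : #C = k := (mem_powersetCard.mp hC).2
  have hDl : #Cᶜ = l := by rw [card_compl, hCk, Fintype.card_fin, Nat.add_sub_cancel_left]
  rw [← sum_comp_orderEmbOfFin hCk hDl]
  refine sum_congr rfl fun h _ => ?_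
  have hterm := prod_mul_splitTerm_map (c := c) hw v a (C.orderEmbOfFin hCk).toEmbedding
    (Cᶜ.orderEmbOfFin hDl).toEmbedding h
  rw [map_orderEmbOfFin_univ, map_orderEmbOfFin_univ, prod_mul_prod_compl] at hterm
  exact hterm

end Splitting

section PairSum

variable [LinearOrder ι] [Fintype ι]

/-- The sum over `k`-element sets of the product of the kernel `w` over pairs and the vertex
weight `a`. For `w = (ζ_p - ζ_q)² / (ζ_p + ζ_q)` this is the paper's `U_k`. -/
def pairSum (w : ι → ι → R) (a : ι → R) (k : ℕ) : R :=
  ∑ I ∈ powersetCard k univ, pairProd w I * ∏ j ∈ I, a j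

lemma card_filter_injective_image_eq {k : ℕ} {I : Finset ι} (hI : #I = k) :
    #{f : Fin k → ι | Function.Injective f ∧ univ.image f = I} = k.factorial := by
  have hcard : #(univ : Finset (Fin k ↪ I)) = k.factorial := by
    rw [card_univ, Fintype.card_embedding_eq, Fintype.card_coe, Fintype.card_fin, hI,
      Nat.descFactorial_self]
  rw [← hcard]
  symm
  refine card_bij (fun e _ r => (e r : ι)) (fun e _ => ?_) (fun e _ e' _ h => ?_) fun f hf => ?_
  · have he : Function.Injective fun r => (e r : ι) := Subtype.val_injective.comp e.injective
    refine mem_filter.mpr ⟨mem_univ _, he, eq_of_subset_of_card_le ?_ ?_⟩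
    · exact image_subset_iff.mpr fun r _ => (e r).2
    · rw [card_image_of_injective _ he, card_univ, Fintype.card_fin, hI]
  · ext r
    exact congrFun h r
  · obtain ⟨hinj, rfl⟩ := (mem_filter.mp hf).2
    exact ⟨⟨fun r => ⟨f r, mem_image_of_mem f (mem_univ r)⟩,
      fun r s h => hinj (congrArg Subtype.val h)⟩, mem_univ _, rfl⟩

lemma sum_tupleWeight {w : ι → ι → R} (hw : ∀ p q, w p q = w q p) (hw0 : ∀ p, w p p = 0)
    (a : ι → R) (k : ℕ) : ∑ f : Fin k → ι, tupleWeight w a f = k.factorial * pairSum w a k := by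
  have himage : ∀ f ∈ ({f | Function.Injective f} : Finset (Fin k → ι)),
      univ.image f ∈ powersetCard k (univ : Finset ι) := fun f hf => by
    rw [mem_powersetCard_univ, card_image_of_injective _ (mem_filter.mp hf).2, card_univ,
      Fintype.card_fin]
  rw [← sum_filter_of_ne fun f _ hf => not_imp_comm.mp (tupleWeight_eq_zero hw hw0 a) hf,
    ← sum_fiberwise_of_maps_to himage, pairSum, mul_sum]
  refine sum_congr rfl fun I hI => ?_
  rw [← card_filter_injective_image_eq (mem_powersetCard_univ.mp hI), ← nsmul_eq_mul,
    ← sum_const, filter_filter]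
  refine sum_congr rfl fun f hf => ?_
  obtain ⟨hinj, rfl⟩ := (mem_filter.mp hf).2
  have himage_eq : univ.image f = univ.map ⟨f, hinj⟩ := (map_eq_image ⟨f, hinj⟩ univ).symm
  rw [tupleWeight, himage_eq, pairProd_map hw, prod_map]
  rfl

end PairSum

end Tuples

section TupleBalance

variable {ι K : Type*} [LinearOrder ι] [Fintype ι] [Field K] [CharZero K]

theorem two_pow_mul_sum_tupleWeight {f m : ℕ} (hf : f ≤ 1) {x : ι → K}
    (hx : ∀ p q, x p + x q ≠ 0) (a : ι → K) :
    2 ^ m * ∑ h : Fin (m + 1) → ι, ∑ g : Fin m → ι,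
        tupleWeight (sqDiff x) a h * tupleWeight (sqDiff x) (x ^ (f + 1) * a) g *
          ∏ r, ∏ s, (x (h r) + x (g s))⁻¹ =
      (m + 1).factorial * m.factorial * (pairSum (sqDiff x / pairAdd x) a (m + 1) *
        pairSum (sqDiff x / pairAdd x) (x ^ f * a) m) := by
  have hU : ∀ p q, (sqDiff x / pairAdd x) p q = (sqDiff x / pairAdd x) q p := fun p q =>
    congrArg₂ (· / ·) (sqDiff_comm x p q) (pairAdd_comm x p q)
  have hU0 : ∀ p, (sqDiff x / pairAdd x) p p = 0 := fun p => by simp [sqDiff]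
  have hchoose : ((m + 1 + m).choose (m + 1) : K) ≠ 0 :=
    Nat.cast_ne_zero.mpr (Nat.choose_pos (Nat.le_add_right _ _)).ne'
  have hbalance (h : Fin (m + 1 + m) → ι) := two_pow_mul_splitSum_inv_pairAdd hf (x := x ∘ h)
    (fun p q => hx (h p) (h q)) (T := univ) (by rw [card_univ, Fintype.card_fin]; ring)
  apply mul_left_cancel₀ hchoose
  calc _ = 2 ^ m * ∑ h : Fin (m + 1 + m) → ι, (∏ t, a (h t)) *
          splitSum (sqDiff (x ∘ h)) (pairAdd (x ∘ h))⁻¹ ((x ∘ h) ^ (f + 1)) (m + 1) univ := by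
        rw [mul_left_comm]
        exact congrArg _ (sum_prod_mul_splitSum_comp (c := (pairAdd x)⁻¹) (sqDiff_comm x)
          (x ^ (f + 1)) a (m + 1) m).symm
    _ = ∑ h : Fin (m + 1 + m) → ι, (∏ t, a (h t)) *
          splitSum (sqDiff (x ∘ h) / pairAdd (x ∘ h)) 1 ((x ∘ h) ^ f) (m + 1) univ := by
        rw [mul_sum]
        exact sum_congr rfl fun h _ => by rw [mul_left_comm, hbalance]
    _ = (m + 1 + m).choose (m + 1) * ∑ h : Fin (m + 1) → ι, ∑ g : Fin m → ι,
          tupleWeight (sqDiff x / pairAdd x) a h *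
            tupleWeight (sqDiff x / pairAdd x) (x ^ f * a) g * ∏ _r, ∏ _s, 1 :=
        sum_prod_mul_splitSum_comp (c := 1) hU (x ^ f) a (m + 1) m
    _ = _ := by
        simp only [prod_const_one, mul_one, ← sum_mul_sum, sum_tupleWeight hU hU0]
        ring

end TupleBalance

section Determinants

open Matrix

section CauchyBinet

variable {n ι R : Type*} [Fintype n] [DecidableEq n] [Fintype ι] [CommRing R]

lemma det_mul_eq_sum_prod_mul_det (A : Matrix n ι R) (B : Matrix ι n R) :
    (A * B).det = ∑ f : n → ι, (∏ r, A r (f r)) * (B.submatrix f id).det := by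
  simp only [← det_transpose (A * B), ← det_transpose (B.submatrix _ id), det_apply',
    transpose_apply, mul_apply, submatrix_apply, id, prod_univ_sum, Fintype.piFinset_univ, mul_sum,
    prod_mul_distrib]
  rw [sum_comm]
  exact sum_congr rfl fun f _ => sum_congr rfl fun σ _ => mul_left_comm _ _ _

/-- The Cauchy–Binet formula, with the sum running over all tuples of columns rather than over
sets of columns. -/
theorem factorial_mul_det_mul (A : Matrix n ι R) (B : Matrix ι n R) :
    (Fintype.card n).factorial * (A * B).det =
      ∑ f : n → ι, (A.submatrix id f).det * (B.submatrix f id).det := by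
  have permuted (σ : Equiv.Perm n) : ∑ f : n → ι,
      (Equiv.Perm.sign σ : R) * (∏ r, A (σ r) (f r)) * (B.submatrix f id).det =
        (A * B).det := by
    rw [det_mul_eq_sum_prod_mul_det, ← (σ.symm.arrowCongr (Equiv.refl ι)).sum_comp]
    refine sum_congr rfl fun f _ => ?_
    have hA : ∏ r, A (σ r) (f (σ r)) = ∏ r, A r (f r) := Equiv.prod_comp σ fun r => A r (f r)
    have hB : (B.submatrix (f ∘ σ) id).det = Equiv.Perm.sign σ * (B.submatrix f id).det :=
      det_permute σ (B.submatrix f id)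
    have hσ : (Equiv.Perm.sign σ : R) * Equiv.Perm.sign σ = 1 := by
      exact_mod_cast congrArg (Int.cast : ℤ → R) (Int.units_coe_mul_self (Equiv.Perm.sign σ))
    change Equiv.Perm.sign σ * (∏ r, A (σ r) (f (σ r))) * (B.submatrix (f ∘ σ) id).det = _
    rw [hA, hB]
    linear_combination (∏ r, A r (f r)) * (B.submatrix f id).det * hσ
  simp only [det_apply' (A.submatrix id _), sum_mul, submatrix_apply, id]
  rw [sum_comm, sum_congr rfl fun σ _ => permuted σ, sum_const, card_univ, Fintype.card_perm,
    nsmul_eq_mul]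

end CauchyBinet

section FirstColumn

variable {ι R : Type*} [CommRing R] {k : ℕ}

/-- The matrix `A` with the column `u` adjoined on the left. -/
def consCol (u : Fin (k + 1) → R) (A : Matrix (Fin (k + 1)) (Fin k) R) :
    Matrix (Fin (k + 1)) (Fin (k + 1)) R :=
  of fun r => Fin.cons (u r) (A r)

lemma det_consCol (u : Fin (k + 1) → R) (A : Matrix (Fin (k + 1)) (Fin k) R) :
    (consCol u A).det =
      ∑ r : Fin (k + 1), (-1) ^ (r : ℕ) * u r * (A.submatrix r.succAbove id).det :=
  det_succ_column_zero _

lemma factorial_mul_det_consCol_mul [Fintype ι] (u : Fin (k + 1) → R)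
    (A : Matrix (Fin (k + 1)) ι R) (B : Matrix ι (Fin k) R) :
    k.factorial * (consCol u (A * B)).det =
      ∑ g : Fin k → ι, (consCol u (A.submatrix id g)).det * (B.submatrix g id).det := by
  simp only [det_consCol, mul_sum, sum_mul]
  rw [sum_comm]
  refine sum_congr rfl fun r _ => ?_
  have hminor := factorial_mul_det_mul (A.submatrix r.succAbove id) B
  rw [Fintype.card_fin] at hminor
  rw [submatrix_mul A B _ id id Function.bijective_id, submatrix_id_id, mul_left_comm, hminor,
    mul_sum]
  exact sum_congr rfl fun g _ => by rw [submatrix_submatrix]; exact (mul_assoc _ _ _).symm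

end FirstColumn

section CauchyDeterminant

open Polynomial

variable {K : Type*} {k : ℕ}

lemma vandermonde_mul_coeff [CommRing K] (x : Fin k → K) {p : Fin k → K[X]}
    (hp : ∀ j, (p j).natDegree < k) :
    vandermonde x * of (fun i j : Fin k => (p j).coeff i) = of fun i j => (p j).eval (x i) := by
  ext i j
  rw [mul_apply, of_apply, eval_eq_sum_range' (hp j), ← Fin.sum_univ_eq_sum_range
    (fun t => (p j).coeff t * x i ^ t)]
  exact sum_congr rfl fun t _ => mul_comm _ _

lemma prod_prod_compl_sub [CommRing K] (y : Fin k → K) :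
    ∏ j, ∏ l ∈ {j}ᶜ, (y l - y j) = (vandermonde y).det * (vandermonde (-y)).det := by
  rw [det_vandermonde, det_vandermonde, ← prod_mul_distrib,
    ← prod_prod_Ioi_mul_eq_prod_prod_off_diag fun l j => y l - y j]
  refine prod_congr rfl fun i _ => ?_
  rw [← prod_mul_distrib]
  exact prod_congr rfl fun j _ => by rw [Pi.neg_apply, Pi.neg_apply, neg_sub_neg]

/-- Lagrange interpolation: `∏ l ≠ j, (z + y l)` is, up to the common factor `∏ l, (z + y l)`,
the `j`-th column `1 / (z + y j)`, and it vanishes at every `-y i` with `i ≠ j`. -/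
theorem det_cauchy_mul_prod [Field K] (x y : Fin k → K) (hxy : ∀ i j, x i + y j ≠ 0) :
    (of fun i j => (x i + y j)⁻¹).det * ∏ i, ∏ j, (x i + y j) =
      (vandermonde x).det * (vandermonde y).det := by
  by_cases hy : Function.Injective y
  · let p : Fin k → K[X] := fun j => ∏ l ∈ {j}ᶜ, (X + C (y l))
    let P : Matrix (Fin k) (Fin k) K := of fun i j => (p j).coeff i
    have hdeg (j : Fin k) : (p j).natDegree < k := by
      rw [natDegree_prod_of_monic _ _ fun l _ => monic_X_add_C (y l)]
      simp [Finset.card_compl, Fin.pos j]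
    have hx : vandermonde x * P = of fun i j => (∏ l, (x i + y l)) * (x i + y j)⁻¹ := by
      rw [vandermonde_mul_coeff x hdeg]
      ext i j
      rw [of_apply, of_apply, Fintype.prod_eq_mul_prod_compl j, mul_right_comm,
        mul_inv_cancel₀ (hxy i j), one_mul, eval_prod]
      simp
    have hy' : vandermonde (-y) * P = diagonal fun j => ∏ l ∈ {j}ᶜ, (y l - y j) := by
      rw [vandermonde_mul_coeff _ hdeg]
      ext i j
      rw [of_apply, eval_prod]
      rcases eq_or_ne i j with rfl | hij
      · simp [neg_add_eq_sub]
      · rw [diagonal_apply_ne _ hij,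
          prod_eq_zero (mem_compl.mpr (notMem_singleton.mpr hij))]
        simp
    have hV : (vandermonde (-y)).det ≠ 0 :=
      det_vandermonde_ne_zero_iff.mpr (neg_injective.comp hy)
    have hP : P.det = (vandermonde y).det := by
      apply mul_left_cancel₀ hV
      rw [← det_mul, hy', det_diagonal, prod_prod_compl_sub, mul_comm]
    rw [← hP, ← det_mul, hx, mul_comm]
    exact (det_mul_column (fun i => ∏ l, (x i + y l)) (of fun i j => (x i + y j)⁻¹)).symm
  · obtain ⟨r, s, hrs, hne⟩ := Function.not_injective_iff.mp hy
    rw [det_zero_of_column_eq hne fun i => by simp [hrs], zero_mul,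
      det_vandermonde_eq_zero_iff.mpr ⟨r, s, hrs, hne⟩, mul_zero]

end CauchyDeterminant

end Determinants

section BorderedMoments

open Matrix

section BorderedCauchy

variable {K : Type*} [Field K] {k : ℕ}

lemma det_vandermonde_cons_zero (y : Fin k → K) :
    (vandermonde (Fin.cons 0 y : Fin (k + 1) → K)).det = (∏ s, y s) * (vandermonde y).det := by
  rw [det_vandermonde, det_vandermonde, Fin.prod_univ_succ, Fin.prod_Ioi_zero]
  simp only [Fin.prod_Ioi_succ, Fin.cons_succ, Fin.cons_zero, sub_zero]

/-- After division of the row `i` by `x i`, this is the Cauchy determinant with the additional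
point `0` adjoined to `y`. -/
lemma det_consCol_one_div {x : Fin (k + 1) → K} {y : Fin k → K} (hx : ∀ i, x i ≠ 0)
    (hxy : ∀ i s, x i + y s ≠ 0) :
    (consCol 1 (of fun i s => x i / (x i + y s))).det =
      (vandermonde x).det * (vandermonde y).det * (∏ s, y s) * ∏ i, ∏ s, (x i + y s)⁻¹ := by
  let y₀ : Fin (k + 1) → K := Fin.cons 0 y
  have hcauchy := det_cauchy_mul_prod x y₀ fun i => Fin.cases (by simpa [y₀] using hx i) (hxy i)
  have hrows : consCol 1 (of fun i s => x i / (x i + y s)) =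
      of fun i j => x i * (of fun i j => (x i + y₀ j)⁻¹) i j := by
    ext i j
    cases j using Fin.cases with
    | zero => simp [consCol, y₀, hx i]
    | succ s => simp [consCol, y₀, div_eq_mul_inv]
  have hprod : ∏ i, ∏ s, (x i + y s) ≠ 0 :=
    prod_ne_zero_iff.mpr fun i _ => prod_ne_zero_iff.mpr fun s _ => hxy i s
  simp only [prod_inv_distrib]
  rw [hrows, det_mul_column, eq_mul_inv_iff_mul_eq₀ hprod]
  simp only [Fin.prod_univ_succ (fun j => _ + y₀ j), y₀, Fin.cons_zero, Fin.cons_succ, add_zero,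
    prod_mul_distrib] at hcauchy
  rw [det_vandermonde_cons_zero] at hcauchy
  linear_combination hcauchy

end BorderedCauchy

lemma tupleWeight_sqDiff {ι R : Type*} [CommRing R] (x a : ι → R) {k : ℕ} (f : Fin k → ι) :
    tupleWeight (sqDiff x) a f = (vandermonde (x ∘ f)).det ^ 2 * ∏ r, a (f r) := by
  rw [tupleWeight, det_vandermonde, ← prod_pow]
  congr 1
  refine prod_congr rfl fun p _ => ?_
  rw [← prod_pow, ← prod_filter, filter_lt_eq_Ioi]
  exact prod_congr rfl fun q _ => sub_sq_comm _ _

variable {ι K : Type*} [Fintype ι] [Field K]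

/-- The matrix of the determinant `G_{m+1}^{(1,j)}`: the single moments of the weights `a` at the
points `x` as the first column, followed by a block of bimoments. -/
def borderedMoments (x a : ι → K) (j m : ℕ) : Matrix (Fin (m + 1)) (Fin (m + 1)) K :=
  consCol (fun r => ∑ p, x p ^ (r : ℕ) * a p) (of fun r s =>
    ∑ p, ∑ q, x p ^ ((r : ℕ) + 1) * x q ^ (j + (s : ℕ)) / (x p + x q) * (a p * a q))

lemma factorial_mul_det_consCol_cauchy_mul (x a : ι → K) (j m : ℕ) (hx : ∀ p q, x p + x q ≠ 0)
    (h : Fin (m + 1) → ι) :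
    m.factorial * (consCol 1 ((of fun r q => x (h r) / (x (h r) + x q)) *
        (of fun q (s : Fin m) => x q ^ j * a q * x q ^ (s : ℕ)))).det =
      (vandermonde (x ∘ h)).det * ∑ g : Fin m → ι,
        tupleWeight (sqDiff x) (x ^ (j + 1) * a) g * ∏ r, ∏ s, (x (h r) + x (g s))⁻¹ := by
  have hx0 (p : ι) : x p ≠ 0 := fun hp => hx p p (by rw [hp, add_zero])
  rw [factorial_mul_det_consCol_mul, mul_sum]
  refine sum_congr rfl fun g _ => ?_
  have hcauchy : (consCol 1 ((of fun r q => x (h r) / (x (h r) + x q)).submatrix id g)).det = _ :=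
    det_consCol_one_div (x := x ∘ h) (y := x ∘ g) (fun _ => hx0 _) fun _ _ => hx _ _
  have hrows : ((of fun q (s : Fin m) => x q ^ j * a q * x q ^ (s : ℕ)).submatrix g id).det =
      (∏ s, x (g s) ^ j * a (g s)) * (vandermonde (x ∘ g)).det :=
    det_mul_column (fun s => x (g s) ^ j * a (g s)) (vandermonde (x ∘ g))
  rw [hcauchy, hrows, tupleWeight_sqDiff]
  simp only [Function.comp_apply, Pi.mul_apply, Pi.pow_apply, pow_succ, prod_mul_distrib]
  ring

lemma factorial_mul_det_borderedMoments (x a : ι → K) (j m : ℕ) (hx : ∀ p q, x p + x q ≠ 0) :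
    (m + 1).factorial * m.factorial * (borderedMoments x a j m).det =
      ∑ h : Fin (m + 1) → ι, ∑ g : Fin m → ι,
        tupleWeight (sqDiff x) a h * tupleWeight (sqDiff x) (x ^ (j + 1) * a) g *
          ∏ r, ∏ s, (x (h r) + x (g s))⁻¹ := by
  let B : Matrix ι (Fin (m + 1)) K := of fun p => Fin.cons (a p) fun s =>
    a p * ∑ q, x p / (x p + x q) * (x q ^ j * a q * x q ^ (s : ℕ))
  have hfactor : borderedMoments x a j m = of (fun (r : Fin (m + 1)) p => x p ^ (r : ℕ)) * B := by
    ext r s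
    cases s using Fin.cases with
    | zero => simp [borderedMoments, consCol, B, mul_apply]
    | succ s =>
      simp only [borderedMoments, consCol, B, mul_apply, of_apply, Fin.cons_succ, mul_sum]
      exact sum_congr rfl fun p _ => sum_congr rfl fun q _ => by ring
  have hminor (h : Fin (m + 1) → ι) : m.factorial * (B.submatrix h id).det =
      (∏ r, a (h r)) * ((vandermonde (x ∘ h)).det * ∑ g : Fin m → ι,
        tupleWeight (sqDiff x) (x ^ (j + 1) * a) g * ∏ r, ∏ s, (x (h r) + x (g s))⁻¹) := by
    rw [← factorial_mul_det_consCol_cauchy_mul x a j m hx h, mul_left_comm, ← det_mul_column]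
    congr 2
    ext r s
    cases s using Fin.cases with
    | zero => simp [consCol, B]
    | succ s => simp [consCol, B, mul_apply]
  have hbinet := factorial_mul_det_mul (of fun (r : Fin (m + 1)) p => x p ^ (r : ℕ)) B
  rw [Fintype.card_fin, ← hfactor] at hbinet
  rw [mul_right_comm, hbinet, sum_mul]
  refine sum_congr rfl fun h _ => ?_
  rw [mul_assoc, mul_comm _ (m.factorial : K), hminor]
  have hvand : ((of fun (r : Fin (m + 1)) p => x p ^ (r : ℕ)).submatrix id h).det =
      (vandermonde (x ∘ h)).det := det_transpose (vandermonde (x ∘ h))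
  simp only [hvand, tupleWeight_sqDiff, mul_assoc, ← mul_sum]
  ring

variable [LinearOrder ι] [CharZero K]

theorem two_pow_mul_det_borderedMoments {f : ℕ} (hf : f ≤ 1) (m : ℕ) {x : ι → K}
    (hx : ∀ p q, x p + x q ≠ 0) (a : ι → K) :
    2 ^ m * (borderedMoments x a f m).det = pairSum (sqDiff x / pairAdd x) a (m + 1) *
      pairSum (sqDiff x / pairAdd x) (x ^ f * a) m := by
  have hfact : ((m + 1).factorial * m.factorial : K) ≠ 0 :=
    mul_ne_zero (Nat.cast_ne_zero.mpr (Nat.factorial_ne_zero _))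
      (Nat.cast_ne_zero.mpr (Nat.factorial_ne_zero _))
  apply mul_left_cancel₀ hfact
  rw [← two_pow_mul_sum_tupleWeight hf hx a, ← factorial_mul_det_borderedMoments x a f m hx,
    mul_left_comm]

end BorderedMoments

section Condensation

open Matrix MvPolynomial

section Adjugate

variable {n R : Type*} [Fintype n] [DecidableEq n] [CommRing R]

/-- The matrix is a rank-two perturbation of `1`, so the Weinstein–Aronszajn identity applies. -/
lemma det_updateCol_updateCol_one {j l : n} (hjl : j ≠ l) (u v : n → R) :
    (((1 : Matrix n n R).updateCol j u).updateCol l v).det = u j * v l - v j * u l := by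
  let U : Matrix n (Fin 2) R := of fun p =>
    ![u p - (1 : Matrix n n R) p j, v p - (1 : Matrix n n R) p l]
  let V : Matrix (Fin 2) n R := of ![(1 : Matrix n n R) j, (1 : Matrix n n R) l]
  have hrank : ((1 : Matrix n n R).updateCol j u).updateCol l v = 1 + U * V := by
    ext p q
    rw [Matrix.add_apply, Matrix.mul_apply, Fin.sum_univ_two, updateCol_apply, updateCol_apply]
    change _ = _ + ((u p - (1 : Matrix n n R) p j) * (1 : Matrix n n R) j q +
      (v p - (1 : Matrix n n R) p l) * (1 : Matrix n n R) l q)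
    simp only [one_apply]
    grind
  have hVU (s t : Fin 2) : (V * U) s t = U (![j, l] s) t := by
    fin_cases s <;> exact congrFun (congrFun (Matrix.one_mul U) _) t
  rw [hrank, det_one_add_mul_comm, det_fin_two]
  simp only [Matrix.add_apply, hVU]
  simp [U, hjl, hjl.symm]

/-- Jacobi's identity for the `2 × 2` minors of the adjugate. -/
theorem adjugate_mul_adjugate_sub (M : Matrix n n R) {j l : n} (hjl : j ≠ l) (i k : n) :
    M.adjugate j i * M.adjugate l k - M.adjugate j k * M.adjugate l i =
      M.det * ((M.updateCol j (Pi.single i 1)).updateCol l (Pi.single k 1)).det := by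
  let A := mvPolynomialX n n ℤ
  have hcol (i : n) : A *ᵥ A.adjugate.col i = A.det • Pi.single i 1 := by
    rw [← mulVec_single_one, mulVec_mulVec, mul_adjugate, smul_mulVec, one_mulVec]
  have generic : A.adjugate j i * A.adjugate l k - A.adjugate j k * A.adjugate l i =
      A.det * ((A.updateCol j (Pi.single i 1)).updateCol l (Pi.single k 1)).det := by
    apply mul_left_cancel₀ (show A.det ≠ 0 from det_mvPolynomialX_ne_zero n ℤ)
    have hminor := det_updateCol_updateCol_one hjl (A.adjugate.col i) (A.adjugate.col k)
    change _ = A.adjugate j i * A.adjugate l k - A.adjugate j k * A.adjugate l i at hminor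
    rw [← hminor, ← det_mul, mul_updateCol, mul_updateCol, mul_one, hcol, hcol,
      det_updateCol_smul, updateCol_comm _ hjl, det_updateCol_smul, updateCol_comm _ hjl.symm]
  let φ : MvPolynomial (n × n) ℤ →ₐ[ℤ] R := aeval fun p => M p.1 p.2
  have hA : φ.mapMatrix A = M := mvPolynomialX_mapMatrix_aeval ℤ M
  have hsingle (i : n) : φ ∘ Pi.single i 1 = Pi.single i 1 := by
    ext p
    simp [Pi.single_apply, apply_ite φ]
  have hadj (i k : n) : φ (A.adjugate i k) = M.adjugate i k := by
    rw [← hA, ← AlgHom.map_adjugate]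
    rfl
  have hmap := congrArg φ generic
  simp only [map_sub, map_mul, AlgHom.map_det, hadj, hA] at hmap
  rw [hmap, AlgHom.mapMatrix_apply, map_updateCol, map_updateCol, hsingle, hsingle,
    ← AlgHom.mapMatrix_apply, hA]

end Adjugate

section Fin

variable {R : Type*} [CommRing R] {m : ℕ}

lemma det_updateCol_single_one (M : Matrix (Fin (m + 1)) (Fin (m + 1)) R) (i j : Fin (m + 1)) :
    (M.updateCol j (Pi.single i 1)).det =
      (-1) ^ (i + j : ℕ) * (M.submatrix i.succAbove j.succAbove).det := by
  rw [← cramer_apply, cramer_eq_adjugate_mulVec, mulVec_single_one, col_apply,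
    adjugate_fin_succ_eq_det_submatrix]

/-- The Desnanot–Jacobi identity for the first and last rows and for the last column and another
one. -/
theorem det_mul_det_submatrix_succAbove (M : Matrix (Fin (m + 2)) (Fin (m + 2)) R)
    (j : Fin (m + 1)) :
    M.det * (M.submatrix (Fin.castSucc ∘ Fin.succ) (Fin.castSucc ∘ j.succAbove)).det =
      (M.submatrix Fin.castSucc Fin.castSucc).det *
          (M.submatrix Fin.succ j.castSucc.succAbove).det -
        (M.submatrix Fin.castSucc j.castSucc.succAbove).det *
          (M.submatrix Fin.succ Fin.castSucc).det := by
  have hminor : ((M.updateCol j.castSucc (Pi.single 0 1)).updateCol (Fin.last _)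
      (Pi.single (Fin.last _) 1)).det =
        (-1) ^ (j : ℕ) *
          (M.submatrix (Fin.castSucc ∘ Fin.succ) (Fin.castSucc ∘ j.succAbove)).det := by
    rw [det_updateCol_single_one, Fin.succAbove_last, ← two_mul, pow_mul, neg_one_sq, one_pow,
      one_mul]
    have hinner : ((M.updateCol j.castSucc (Pi.single 0 1)).submatrix Fin.castSucc
        Fin.castSucc) = (M.submatrix Fin.castSucc Fin.castSucc).updateCol j (Pi.single 0 1) := by
      ext r s
      simp [updateCol_apply, Pi.single_apply]
    rw [hinner, det_updateCol_single_one, Fin.succAbove_zero, Fin.val_zero, zero_add,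
      submatrix_submatrix]
  have hjacobi := adjugate_mul_adjugate_sub M (Fin.castSucc_lt_last j).ne 0 (Fin.last _)
  rw [hminor] at hjacobi
  simp only [adjugate_fin_succ_eq_det_submatrix, Fin.val_zero, Fin.val_last, Fin.val_castSucc,
    Fin.succAbove_zero, Fin.succAbove_last, zero_add, pow_add _ (m + 1)] at hjacobi
  rcases neg_one_pow_eq_or R (j : ℕ) with hj | hj <;>
    rcases neg_one_pow_eq_or R (m + 1) with hm | hm <;>
    rw [hj, hm] at hjacobi <;> grind

end Fin

end Condensation

section Moments

open Matrix

variable (n : ℕ) (ζ a : Fin n → ℝ)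

/-- The matrix whose determinant is `G_{m+1}^{(i,j)}`. -/
noncomputable def momentMatrix (i j : ℤ) (m : ℕ) : Matrix (Fin (m + 1)) (Fin (m + 1)) ℝ :=
  consCol (fun r => alphaM n ζ a (i - 1 + (r : ℕ)))
    (of fun r s => Imom n ζ a (i + (r : ℕ)) (j + (s : ℕ)))

lemma Gdet_add_one (i j : ℤ) (m : ℕ) :
    Gdet n ζ a i j (m + 1) = (momentMatrix n ζ a i j m).det := by
  rw [Gdet, if_neg (by omega)]
  change det (of fun r s : Fin (m + 1) => _) = _
  congr 1
  ext r s
  cases s using Fin.cases <;> simp [momentMatrix, consCol]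

lemma Gdet_of_nonpos (i j : ℤ) {k : ℤ} (hk : k ≤ 0) : Gdet n ζ a i j k = 0 :=
  if_pos (by omega)

/-- The Desnanot–Jacobi identity applied to the second and last columns. -/
lemma Gdet_condensation (i j : ℤ) {k : ℤ} (hk : 1 ≤ k) :
    Gdet n ζ a i j (k + 1) * Gdet n ζ a (i + 1) (j + 1) (k - 1) =
      Gdet n ζ a i j k * Gdet n ζ a (i + 1) (j + 1) k -
        Gdet n ζ a i (j + 1) k * Gdet n ζ a (i + 1) j k := by
  obtain ⟨m, rfl⟩ := Int.exists_add_of_le hk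
  rw [add_comm 1, add_sub_cancel_right]
  cases m with
  | zero => simp [Gdet]
  | succ m =>
    let M := momentMatrix n ζ a i j (m + 2)
    have hinner : M.submatrix (Fin.castSucc ∘ Fin.succ) (Fin.castSucc ∘ Fin.succAbove 1) =
        momentMatrix n ζ a (i + 1) (j + 1) m := by
      ext r s
      cases s using Fin.cases <;> simp [M, momentMatrix, consCol, add_assoc, add_comm (1 : ℤ)]
    have hcorner : M.submatrix Fin.castSucc Fin.castSucc = momentMatrix n ζ a i j (m + 1) := by
      ext r s
      cases s using Fin.cases <;> simp [M, momentMatrix, consCol]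
    have hboth : M.submatrix Fin.succ (Fin.castSucc 1).succAbove =
        momentMatrix n ζ a (i + 1) (j + 1) (m + 1) := by
      ext r s
      cases s using Fin.cases <;> simp [M, momentMatrix, consCol, add_assoc, add_comm (1 : ℤ)]
    have hcols : M.submatrix Fin.castSucc (Fin.castSucc 1).succAbove =
        momentMatrix n ζ a i (j + 1) (m + 1) := by
      ext r s
      cases s using Fin.cases <;> simp [M, momentMatrix, consCol, add_assoc, add_comm (1 : ℤ)]
    have hrows : M.submatrix Fin.succ Fin.castSucc = momentMatrix n ζ a (i + 1) j (m + 1) := by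
      ext r s
      cases s using Fin.cases <;> simp [M, momentMatrix, consCol, add_assoc, add_comm (1 : ℤ)]
    have hjacobi := det_mul_det_submatrix_succAbove M 1
    rw [hinner, hcorner, hboth, hcols, hrows] at hjacobi
    simp only [M, ← Gdet_add_one] at hjacobi
    exact_mod_cast hjacobi

lemma Vsum_eq_Usum (k : ℤ) : Vsum n ζ a k = Usum n ζ (ζ * a) k := rfl

variable {n ζ a}

lemma Usum_natCast (k : ℕ) : Usum n ζ a k = pairSum (sqDiff ζ / pairAdd ζ) a k := by
  have hterm (I : Finset (Fin n)) :
      DeltaI n ζ I ^ 2 / GammaI n ζ I = pairProd (sqDiff ζ / pairAdd ζ) I := by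
    simp only [DeltaI, GammaI, pairProd, ← prod_pow, ← prod_div_distrib]
    refine prod_congr rfl fun p _ => prod_congr rfl fun q _ => ?_
    split_ifs with hpq
    · simp [sqDiff, pairAdd, sub_sq_comm, add_comm]
    · simp
  rw [Usum, pairSum, Int.toNat_natCast]
  split_ifs with hk
  · rw [powersetCard_eq_empty.mpr (by simp; omega), sum_empty]
  · simp only [hterm]

lemma Usum_of_neg {k : ℤ} (hk : k < 0) : Usum n ζ a k = 0 := if_pos (Or.inl hk)

lemma Usum_pos (hζ0 : ∀ p, 0 < ζ p) (hζ : Function.Injective ζ) (ha : ∀ p, 0 < a p)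
    {k : ℤ} (hk : 0 ≤ k) (hkn : k ≤ n) : 0 < Usum n ζ a k := by
  lift k to ℕ using hk
  rw [Usum_natCast, pairSum]
  refine sum_pos (fun I _ => mul_pos (pairProd_pos fun p q hpq => ?_) (prod_pos fun p _ => ha p))
    (powersetCard_nonempty.mpr (by simpa using hkn))
  exact div_pos (sq_pos_of_ne_zero (sub_ne_zero.mpr (hζ.ne hpq.ne))) (add_pos (hζ0 p) (hζ0 q))

lemma momentMatrix_one_natCast (j m : ℕ) :
    momentMatrix n ζ a 1 j m = borderedMoments ζ a j m := by
  ext r s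
  cases s using Fin.cases with
  | zero => simp [momentMatrix, borderedMoments, consCol, alphaM]
  | succ s =>
    simp only [momentMatrix, borderedMoments, consCol, Imom, of_apply, Fin.cons_succ,
      add_comm (1 : ℤ)]
    norm_cast

theorem Gdet_one_natCast (hζ : ∀ p q, ζ p + ζ q ≠ 0) {j : ℕ} (hj : j ≤ 1) (k : ℤ) :
    Gdet n ζ a 1 j k = Usum n ζ a k * Usum n ζ (ζ ^ j * a) (k - 1) / 2 ^ (k - 1) := by
  rcases le_or_gt k 0 with hk | hk
  · rw [Gdet_of_nonpos _ _ _ _ _ hk, Usum_of_neg (k := k - 1) (by omega), mul_zero, zero_div]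
  · obtain ⟨m, rfl⟩ := Int.exists_add_of_le (show 1 ≤ k from hk)
    have hU := Usum_natCast (ζ := ζ) (a := a) (m + 1)
    push_cast at hU
    rw [add_comm 1, Gdet_add_one, add_sub_cancel_right, momentMatrix_one_natCast, hU,
      Usum_natCast, zpow_natCast, ← two_pow_mul_det_borderedMoments hj m hζ a,
      mul_div_cancel_left₀ _ (by positivity)]

lemma Gdet_add_one_add_one (hζ : ∀ p, ζ p ≠ 0) (i j k : ℤ) :
    Gdet n ζ a (i + 1) (j + 1) k = Gdet n ζ (ζ * a) i j k := by
  have hα (r : ℤ) : alphaM n ζ a (i + 1 - 1 + r) = alphaM n ζ (ζ * a) (i - 1 + r) := by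
    refine sum_congr rfl fun p _ => ?_
    rw [show i + 1 - 1 + r = i - 1 + r + 1 by ring, zpow_add_one₀ (hζ p), Pi.mul_apply, mul_assoc]
  have hI (r s : ℤ) : Imom n ζ a (i + 1 + r) (j + 1 + s) = Imom n ζ (ζ * a) (i + r) (j + s) := by
    refine sum_congr rfl fun p _ => sum_congr rfl fun q _ => ?_
    rw [add_right_comm, add_right_comm j, zpow_add_one₀ (hζ p), zpow_add_one₀ (hζ q), Pi.mul_apply,
      Pi.mul_apply]
    ring
  simp only [Gdet, hα, hI]

theorem Gdet_one_zero (hζ : ∀ p q, ζ p + ζ q ≠ 0) (k : ℤ) :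
    Gdet n ζ a 1 0 k = Usum n ζ a k * Usum n ζ a (k - 1) / 2 ^ (k - 1) := by
  simpa using Gdet_one_natCast hζ zero_le_one k

theorem Gdet_one_one (hζ : ∀ p q, ζ p + ζ q ≠ 0) (k : ℤ) :
    Gdet n ζ a 1 1 k = Usum n ζ a k * Vsum n ζ a (k - 1) / 2 ^ (k - 1) := by
  simpa [Vsum_eq_Usum] using Gdet_one_natCast hζ le_rfl k

theorem Gdet_two_one (hζ : ∀ p q, ζ p + ζ q ≠ 0) (k : ℤ) :
    Gdet n ζ a 2 1 k = Vsum n ζ a k * Vsum n ζ a (k - 1) / 2 ^ (k - 1) := by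
  have hζ0 (p : Fin n) : ζ p ≠ 0 := fun hp => hζ p p (by rw [hp, add_zero])
  rw [Vsum_eq_Usum, Vsum_eq_Usum, ← Gdet_one_zero hζ]
  exact Gdet_add_one_add_one hζ0 1 0 k

/-- The other three closed forms determine `G_k^{(2,0)}` through the condensation identity. -/
theorem Gdet_two_zero (hζ : ∀ p q, ζ p + ζ q ≠ 0) {k : ℤ} (hk : 1 ≤ k)
    (hU : Usum n ζ a k ≠ 0) (hV : Vsum n ζ a (k - 1) ≠ 0) :
    Gdet n ζ a 2 0 k =
      (Usum n ζ a (k - 1) * Vsum n ζ a k - Usum n ζ a (k + 1) * Vsum n ζ a (k - 2)) /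
        2 ^ (k - 1) := by
  have hcond := Gdet_condensation n ζ a 1 0 hk
  simp only [zero_add, one_add_one_eq_two] at hcond
  rw [Gdet_one_zero hζ, Gdet_one_zero hζ, Gdet_two_one hζ, Gdet_two_one hζ, Gdet_one_one hζ,
    add_sub_cancel_right, sub_sub, one_add_one_eq_two, zpow_sub_one₀ two_ne_zero,
    zpow_sub₀ two_ne_zero] at hcond
  rw [zpow_sub_one₀ two_ne_zero, eq_div_iff (by positivity)]
  apply mul_left_cancel₀ (mul_ne_zero hU hV)
  field_simp at hcond ⊢
  linear_combination hcond

end Moments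

/-- Lemma 2.4 (second part): for `1 ≤ k ≤ n`,
`G_k^{(1,0)} = U_k U_{k-1}/2^{k-1} > 0`, `G_k^{(1,1)} = U_k V_{k-1}/2^{k-1} > 0`,
`G_k^{(2,1)} = V_k V_{k-1}/2^{k-1} > 0`, and
`G_k^{(2,0)} = (U_{k-1} V_k - U_{k+1} V_{k-2})/2^{k-1}`. -/
theorem stmt_1 (n : ℕ) (hn : 1 ≤ n) (ζ a : Fin n → ℝ)
    (hζ0 : ∀ p, 0 < ζ p) (hζmono : StrictMono ζ) (ha : ∀ p, 0 < a p)
    (k : ℤ) (hk1 : 1 ≤ k) (hkn : k ≤ (n : ℤ)) :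
    Gdet n ζ a 1 0 k = Usum n ζ a k * Usum n ζ a (k - 1) / 2 ^ (k - 1) ∧
    0 < Gdet n ζ a 1 0 k ∧
    Gdet n ζ a 1 1 k = Usum n ζ a k * Vsum n ζ a (k - 1) / 2 ^ (k - 1) ∧
    0 < Gdet n ζ a 1 1 k ∧
    Gdet n ζ a 2 1 k = Vsum n ζ a k * Vsum n ζ a (k - 1) / 2 ^ (k - 1) ∧
    0 < Gdet n ζ a 2 1 k ∧
    Gdet n ζ a 2 0 k =
      (Usum n ζ a (k - 1) * Vsum n ζ a k - Usum n ζ a (k + 1) * Vsum n ζ a (k - 2)) /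
        2 ^ (k - 1) := by
  have hζ (p q : Fin n) : ζ p + ζ q ≠ 0 := (add_pos (hζ0 p) (hζ0 q)).ne'
  have hU {l : ℤ} : 0 ≤ l → l ≤ n → 0 < Usum n ζ a l := Usum_pos hζ0 hζmono.injective ha
  have hV {l : ℤ} : 0 ≤ l → l ≤ n → 0 < Vsum n ζ a l :=
    Usum_pos hζ0 hζmono.injective fun p => mul_pos (hζ0 p) (ha p)
  have hUk := hU (l := k) (by omega) hkn
  have hVk := hV (l := k) (by omega) hkn
  have hUk' := hU (l := k - 1) (by omega) (by omega)
  have hVk' := hV (l := k - 1) (by omega) (by omega)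
  rw [Gdet_one_zero hζ, Gdet_one_one hζ, Gdet_two_one hζ, Gdet_two_zero hζ hk1 hUk.ne' hVk'.ne']
  refine ⟨rfl, ?_, rfl, ?_, rfl, ?_, rfl⟩ <;> positivity
end

section
/- For every integer k one has (G_k^{(1,0)})² = 2 F_k^{(1,0)} F_{k−1}^{(1,0)} and (G_k^{(1,1)})² = 2 F_k^{(1,0)} F_{k−1}^{(2,1)}. -/
open Finset

/-!
The bimoments satisfy `I_{i+1,j} + I_{i,j+1} = α_i α_j`, so `M = (I_{i+1+r,i+s})` and
`v = (α_{i+r})` satisfy `M + Mᵀ = v vᵀ`. Multiplying by `adj M` on the left and by `(adj M)ᵀ` on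
the right gives `(adj M v)(adj M v)ᵀ = det M (adj M + (adj M)ᵀ)`. By Cramer's rule the `c`-th
diagonal entry says that the determinant of `M` with column `c` replaced by `v` squares to twice
`det M` times the principal minor omitting `c`. The last column gives `G^{(i+1,i)}`, up to a cyclic
permutation of the columns, and the first column gives `G^{(i+1,i+1)}`.
-/

section CramerRankOne

open Matrix

variable {R : Type*} [CommRing R]

lemma vecMulVec_cramer_of_add_transpose_eq {ι : Type*} [Fintype ι] [DecidableEq ι]
    {M : Matrix ι ι R} {u w : ι → R} (h : M + Mᵀ = vecMulVec u w) :
    vecMulVec (M.cramer u) (M.cramer w) = M.det • (M.adjugate + M.adjugateᵀ) :=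
  calc vecMulVec (M.cramer u) (M.cramer w)
      = M.adjugate * vecMulVec u w * M.adjugateᵀ := by
        rw [mul_vecMulVec, vecMulVec_mul, vecMul_transpose, cramer_eq_adjugate_mulVec,
          cramer_eq_adjugate_mulVec]
    _ = M.adjugate * M * M.adjugateᵀ + M.adjugate * (M.adjugate * M)ᵀ := by
        rw [← h, mul_add, add_mul, transpose_mul, Matrix.mul_assoc M.adjugate Mᵀ]
    _ = M.det • (M.adjugate + M.adjugateᵀ) := by
        simp [adjugate_mul, add_comm]

lemma det_updateCol_sq_of_add_transpose_eq {m : ℕ}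
    {M : Matrix (Fin (m + 1)) (Fin (m + 1)) R} {v : Fin (m + 1) → R}
    (h : M + Mᵀ = vecMulVec v v) (c : Fin (m + 1)) :
    (M.updateCol c v).det ^ 2 = 2 * M.det * (M.submatrix c.succAbove c.succAbove).det := by
  have adjugate_diag : M.adjugate c c = (M.submatrix c.succAbove c.succAbove).det := by
    simp [adjugate_fin_succ_eq_det_submatrix]
  have diag := congrFun₂ (vecMulVec_cramer_of_add_transpose_eq h) c c
  simp only [vecMulVec_apply, cramer_apply, Matrix.smul_apply, Matrix.add_apply,
    transpose_apply, smul_eq_mul, adjugate_diag] at diag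
  linear_combination diag

end CramerRankOne

section Moments

variable (n : ℕ) (ζ a : Fin n → ℝ)

/-- The vector of moments `(α_i, …, α_{i+m-1})`. -/
noncomputable def momentVector (i : ℤ) (m : ℕ) : Fin m → ℝ :=
  fun r => alphaM n ζ a (i + (r : ℕ))

/-- The `m × m` matrix of bimoments `(I_{i+r,j+s})`, whose determinant is `F_m^{(i,j)}`. -/
noncomputable def bimomentMatrix (i j : ℤ) (m : ℕ) : Matrix (Fin m) (Fin m) ℝ :=
  Matrix.of fun r s => Imom n ζ a (i + (r : ℕ)) (j + (s : ℕ))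

lemma Imom_comm (i j : ℤ) : Imom n ζ a i j = Imom n ζ a j i := by
  unfold Imom
  rw [sum_comm]
  refine sum_congr rfl fun p _ => sum_congr rfl fun q _ => ?_
  rw [add_comm (ζ q), mul_comm (ζ q ^ i), mul_comm (a q)]

variable {ζ} in
lemma Imom_add_one_left_add_Imom_add_one_right (hζ : ∀ p q, ζ p + ζ q ≠ 0) (i j : ℤ) :
    Imom n ζ a (i + 1) j + Imom n ζ a i (j + 1) = alphaM n ζ a i * alphaM n ζ a j := by
  have ne_zero (p : Fin n) : ζ p ≠ 0 := fun h => hζ p p (by simp [h])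
  simp only [Imom, alphaM, sum_mul_sum, ← sum_add_distrib]
  refine sum_congr rfl fun p _ => sum_congr rfl fun q _ => ?_
  have := hζ p q
  rw [zpow_add_one₀ (ne_zero p), zpow_add_one₀ (ne_zero q)]
  field_simp

variable {ζ} in
lemma bimomentMatrix_add_transpose (hζ : ∀ p q, ζ p + ζ q ≠ 0) (i : ℤ) (m : ℕ) :
    bimomentMatrix n ζ a (i + 1) i m + (bimomentMatrix n ζ a (i + 1) i m).transpose =
      Matrix.vecMulVec (momentVector n ζ a i m) (momentVector n ζ a i m) := by
  ext r s
  simp only [bimomentMatrix, momentVector, Matrix.add_apply, Matrix.transpose_apply,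
    Matrix.of_apply, Matrix.vecMulVec_apply, add_right_comm i 1,
    Imom_comm n ζ a (i + (s : ℕ) + 1), Imom_add_one_left_add_Imom_add_one_right n a hζ]

lemma bimomentMatrix_submatrix_castSucc (i j : ℤ) (m : ℕ) :
    (bimomentMatrix n ζ a i j (m + 1)).submatrix Fin.castSucc Fin.castSucc =
      bimomentMatrix n ζ a i j m :=
  rfl

lemma bimomentMatrix_submatrix_succ (i j : ℤ) (m : ℕ) :
    (bimomentMatrix n ζ a i j (m + 1)).submatrix Fin.succ Fin.succ =
      bimomentMatrix n ζ a (i + 1) (j + 1) m := by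
  ext r s
  simp [bimomentMatrix, add_assoc, add_comm (1 : ℤ)]

lemma Fdet_natCast (i j : ℤ) (m : ℕ) :
    Fdet n ζ a i j m = (bimomentMatrix n ζ a i j m).det :=
  if_neg (by lia)

lemma Gdet_natCast_add_one (i j : ℤ) (m : ℕ) :
    Gdet n ζ a i j (m + 1) = Matrix.det (Matrix.of fun r : Fin (m + 1) =>
      Fin.cons (momentVector n ζ a (i - 1) (m + 1) r)
        fun s : Fin m => Imom n ζ a (i + (r : ℕ)) (j + (s : ℕ))) := by
  rw [Gdet, if_neg (by lia)]
  change Matrix.det (Matrix.of fun r s : Fin (m + 1) => _) = _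
  congr 2
  ext r s
  cases s using Fin.cases <;> simp [momentVector]

lemma Gdet_eq_det_updateCol_zero (i j : ℤ) (m : ℕ) :
    Gdet n ζ a i (j + 1) (m + 1) = ((bimomentMatrix n ζ a i j (m + 1)).updateCol 0
      (momentVector n ζ a (i - 1) (m + 1))).det := by
  rw [Gdet_natCast_add_one]
  congr 1
  ext r s
  cases s using Fin.cases <;> simp [bimomentMatrix, add_assoc, add_comm (1 : ℤ)]

lemma Gdet_eq_neg_one_pow_mul_det_updateCol_last (i j : ℤ) (m : ℕ) :
    Gdet n ζ a i j (m + 1) = (-1) ^ m * ((bimomentMatrix n ζ a i j (m + 1)).updateCol (Fin.last m)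
      (momentVector n ζ a (i - 1) (m + 1))).det := by
  set G : Matrix (Fin (m + 1)) (Fin (m + 1)) ℝ := Matrix.of fun r =>
    Fin.cons (momentVector n ζ a (i - 1) (m + 1) r)
      fun s : Fin m => Imom n ζ a (i + (r : ℕ)) (j + (s : ℕ)) with hG
  have updateCol_eq_rotate : (bimomentMatrix n ζ a i j (m + 1)).updateCol (Fin.last m)
      (momentVector n ζ a (i - 1) (m + 1)) = G.submatrix id (finRotate (m + 1)) := by
    ext r s
    cases s using Fin.lastCases <;>
      simp [hG, bimomentMatrix, (Fin.castSucc_lt_last _).ne]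
  rw [Gdet_natCast_add_one, updateCol_eq_rotate, Matrix.det_permute', sign_finRotate]
  simp [← mul_assoc, ← mul_pow, hG]

variable {ζ}

lemma Gdet_add_one_self_sq (hζ : ∀ p q, ζ p + ζ q ≠ 0) (i : ℤ) (m : ℕ) :
    Gdet n ζ a (i + 1) i (m + 1) ^ 2 =
      2 * Fdet n ζ a (i + 1) i (m + 1) * Fdet n ζ a (i + 1) i m := by
  have key := det_updateCol_sq_of_add_transpose_eq
    (bimomentMatrix_add_transpose n a hζ i (m + 1)) (Fin.last m)
  rw [Fin.succAbove_last, bimomentMatrix_submatrix_castSucc] at key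
  rw [Gdet_eq_neg_one_pow_mul_det_updateCol_last, add_sub_cancel_right, mul_pow, key,
    ← pow_mul, (even_two.mul_left m).neg_one_pow, one_mul, ← Nat.cast_succ, Fdet_natCast,
    Fdet_natCast]

lemma Gdet_add_one_add_one_sq (hζ : ∀ p q, ζ p + ζ q ≠ 0) (i : ℤ) (m : ℕ) :
    Gdet n ζ a (i + 1) (i + 1) (m + 1) ^ 2 =
      2 * Fdet n ζ a (i + 1) i (m + 1) * Fdet n ζ a (i + 2) (i + 1) m := by
  have key := det_updateCol_sq_of_add_transpose_eq
    (bimomentMatrix_add_transpose n a hζ i (m + 1)) 0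
  rw [Fin.succAbove_zero, bimomentMatrix_submatrix_succ, add_assoc i, one_add_one_eq_two] at key
  rw [Gdet_eq_det_updateCol_zero, add_sub_cancel_right, key, ← Nat.cast_succ, Fdet_natCast,
    Fdet_natCast]

theorem stmt_2_general (hζ : ∀ p q, ζ p + ζ q ≠ 0) (i k : ℤ) :
    Gdet n ζ a (i + 1) i k ^ 2 =
        2 * Fdet n ζ a (i + 1) i k * Fdet n ζ a (i + 1) i (k - 1) ∧
      Gdet n ζ a (i + 1) (i + 1) k ^ 2 =
        2 * Fdet n ζ a (i + 1) i k * Fdet n ζ a (i + 2) (i + 1) (k - 1) := by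
  rcases lt_or_ge k 1 with hk | hk
  · have hk' : k - 1 < 0 := by lia
    simp [Gdet, Fdet, hk, hk']
  · obtain ⟨m, rfl⟩ : ∃ m : ℕ, k = m + 1 := ⟨(k - 1).toNat, by lia⟩
    rw [add_sub_cancel_right]
    exact ⟨Gdet_add_one_self_sq n a hζ i m, Gdet_add_one_add_one_sq n a hζ i m⟩

end Moments

/-- Corollary 2.5: for every integer `k`,
`(G_k^{(1,0)})² = 2 F_k^{(1,0)} F_{k-1}^{(1,0)}` and
`(G_k^{(1,1)})² = 2 F_k^{(1,0)} F_{k-1}^{(2,1)}`. -/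
theorem stmt_2 (n : ℕ) (hn : 1 ≤ n) (ζ a : Fin n → ℝ)
    (hζ0 : ∀ p, 0 < ζ p) (hζmono : StrictMono ζ) (ha : ∀ p, 0 < a p)
    (k : ℤ) :
    Gdet n ζ a 1 0 k ^ 2 = 2 * Fdet n ζ a 1 0 k * Fdet n ζ a 1 0 (k - 1) ∧
    Gdet n ζ a 1 1 k ^ 2 = 2 * Fdet n ζ a 1 0 k * Fdet n ζ a 2 1 (k - 1) := by
  simpa using stmt_2_general n a (fun p q => (add_pos (hζ0 p) (hζ0 q)).ne') 0 k
end
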